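/- Let a ≥ b ≥ 1, n = a + b, and let k be a positive integer with n ≥ k. Let S be a Haar-distributed random matrix from the compact symplectic group Sp(2n), let I''_{ab} be the 2n×2n matrix diag(I_a, −I_b, I_a, −I_b), and set W̃ = (w̃_{ij}) = Sᵀ J I''_{ab} S, which encodes the random matrix W = (J Sᵀ Jᵀ) I''_{ab} S associated with Sp(2n)/Sp(2a)×Sp(2b) via w̃_{ij} = (J W)_{ij}. For any sequence i = (i_1,…,i_{2k}) in {1,…,2n}, E[ w̃_{i_1 i_2} w̃_{i_3 i_4} ⋯ w̃_{i_{2k−1} i_{2k}} ] = Σ_{σ ∈ M_{2k}} Δ'_σ(i) Wg^{CII}(σ; a, b), where Wg^{CII}(·; a, b) := T^{CII}_{ab} ⋆ Wg^Sp(·; n) and T^{CII}_{ab}(σ) = (−1)^{k − c(σ)} ε(σ) 2^{c(σ)} (a+b)^{ℓe(σ)} (a−b)^{ℓo(σ)}, with ℓe(σ) (resp. ℓo(σ)) the number of connected components of Γ(σ) whose size is ≡ 0 (resp. ≡ 2) modulo 4. -/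

import Mathlib

/-!
Both sides of the identity, viewed as tensors in the index sequence `i`, are invariant under
`Sp(2n)`, and they have the same complete contractions against the forms `Δ'_ρ`; in the range
`k ≤ n` this forces them to be equal.

*Invariance.* The left side is linear in the mean tensor power `avg` of the random matrix. Since
the measure is invariant on the left, `avg` is a self-adjoint projection, and so it absorbs
symplectic factors on the right too (`avg_mul_kron`). The right side is a combination of the `Δ'_σ`,
which are invariant by the defining relation of `Sp(2n)`.

*Contractions determine invariants* (`inv_eq_zero`). Differentiating the invariance along
one-parameter subgroups and summing over suitable Lie algebra elements gives the Casimir identity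
(`casimir`): up to contraction terms, `(2n + 1) f` is a signed sum of transposed copies of `f` over
the `m - 1` other slots. At an entry of maximal modulus this is impossible for `m ≤ 2n + 1` unless
`f = 0` (`traceless_eq_zero`). Contractions of invariant tensors are invariant, so induction on the
degree applies.

*Comparison of contractions.* Symplectic matrices preserve `Δ'_ρ`, so contracting the left side
with `Δ'_ρ` leaves the sum of `Δ'_ρ(p) ∏ (J I''_{ab})_{p_{2r-1} p_{2r}}` over all `p`
(`contract_avg`). This sum factors over the components of `Γ(ρ)`; its sign is found from a proper
2-colouring of `Γ(ρ)` (`sgn_eq`, `loop_sum`), and it equals `T^CII(ρ)` (`loop_sum_CII`). The same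
computation identifies the Gram matrix of the `Δ'_σ` with `T^Sp(ρ⁻¹σ)` (`gram`). On `M_{2k}`, a
system of representatives of the left cosets of `H_k`, the Weingarten function inverts this matrix
(`sconv_gram`), so that the contraction of the right side is `T^CII(ρ)` as well.
-/

/-!
Weingarten calculus for classical compact Lie groups and compact symmetric spaces
(S. Matsumoto, "Weingarten calculus for matrix ensembles associated with compact
symmetric spaces"): common definitions.

We index `{1,…,m}` by `Fin m` (0-indexed), so the pair `{2r-1, 2r}` becomes
`{2r, 2r+1}` for `r ∈ Fin k`.
-/

open MeasureTheory Finset Matrix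

namespace WgPaper

/-- `lo r` is the (0-indexed) point `2r`, i.e. `2r - 1` in 1-indexed notation. -/
def lo {k : ℕ} (i : Fin k) : Fin (2 * k) := ⟨2 * (i : ℕ), by have := i.isLt; omega⟩

/-- `hi r` is the (0-indexed) point `2r + 1`, i.e. `2r` in 1-indexed notation. -/
def hi {k : ℕ} (i : Fin k) : Fin (2 * k) := ⟨2 * (i : ℕ) + 1, by have := i.isLt; omega⟩

/-- Number of cycles of a permutation, counting fixed points as 1-cycles. -/
def cyc {m : ℕ} (σ : Equiv.Perm (Fin m)) : ℕ :=
  Multiset.card σ.cycleType + (Finset.univ.filter fun x => σ x = x).card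

/-- Number of even-length cycles of a permutation. -/
def evenCycles {m : ℕ} (σ : Equiv.Perm (Fin m)) : ℕ :=
  Multiset.card (σ.cycleType.filter fun d => d % 2 = 0)

/-- Number of odd-length cycles of a permutation, counting fixed points as 1-cycles. -/
def oddCycles {m : ℕ} (σ : Equiv.Perm (Fin m)) : ℕ :=
  Multiset.card (σ.cycleType.filter fun d => d % 2 = 1)
    + (Finset.univ.filter fun x => σ x = x).card

/-- The sign `ε(σ)` of a permutation, as an element of a commutative ring. -/
def sgn (R : Type*) [CommRing R] {m : ℕ} (σ : Equiv.Perm (Fin m)) : R :=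
  ((Equiv.Perm.sign σ : ℤ) : R)

/-- Full convolution on a finite group: `(f * g)(σ) = ∑_τ f(τ) g(τ⁻¹ σ)`. -/
def conv {G : Type*} [Group G] [Fintype G] {R : Type*} [CommRing R] (f g : G → R) : G → R :=
  fun σ => ∑ τ : G, f τ * g (τ⁻¹ * σ)

/-- The Dirac function at the identity permutation. -/
def deltaId {m : ℕ} {R : Type*} [CommRing R] : Equiv.Perm (Fin m) → R :=
  fun σ => if σ = 1 then 1 else 0

/-- The graph `Γ(σ)` on `{1,…,2k}` whose edges are `{2r-1, 2r}` and `{σ(2r-1), σ(2r)}`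
(in 1-indexed notation) for `1 ≤ r ≤ k`. -/
def Gamma {k : ℕ} (σ : Equiv.Perm (Fin (2 * k))) : SimpleGraph (Fin (2 * k)) :=
  SimpleGraph.fromRel fun a b =>
    (∃ r : Fin k, a = lo r ∧ b = hi r) ∨ ∃ r : Fin k, a = σ (lo r) ∧ b = σ (hi r)

/-- `c(σ)`, the number of connected components of `Γ(σ)`. -/
noncomputable def ccount {k : ℕ} (σ : Equiv.Perm (Fin (2 * k))) : ℕ :=
  Nat.card (Gamma σ).ConnectedComponent

/-- The number of vertices of a connected component of a graph. -/
noncomputable def compSize {V : Type*} {G : SimpleGraph V} (C : G.ConnectedComponent) : ℕ :=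
  Nat.card {v // G.connectedComponentMk v = C}

/-- `ℓe(σ)`: the number of connected components of `Γ(σ)` whose size is `≡ 0 (mod 4)`. -/
noncomputable def ecomp {k : ℕ} (σ : Equiv.Perm (Fin (2 * k))) : ℕ :=
  Nat.card {C : (Gamma σ).ConnectedComponent // compSize C % 4 = 0}

/-- `ℓo(σ)`: the number of connected components of `Γ(σ)` whose size is `≡ 2 (mod 4)`. -/
noncomputable def ocomp {k : ℕ} (σ : Equiv.Perm (Fin (2 * k))) : ℕ :=
  Nat.card {C : (Gamma σ).ConnectedComponent // compSize C % 4 = 2}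

/-- Membership in the hyperoctahedral subgroup `H_k ≤ S_{2k}`: each pair
`{2i-1, 2i}` is mapped onto some pair `{2j-1, 2j}`. -/
def IsHyper {k : ℕ} (ζ : Equiv.Perm (Fin (2 * k))) : Prop :=
  ∀ i : Fin k, ∃ j : Fin k, ({ζ (lo i), ζ (hi i)} : Finset (Fin (2 * k))) = {lo j, hi j}

/-- The defining property of the set `M_{2k}` of coset representatives of `S_{2k}/H_k`:
`σ(2i-1) < σ(2i)` for all `i` and `σ(1) < σ(3) < ⋯ < σ(2k-1)`. -/
def MProp {k : ℕ} (σ : Equiv.Perm (Fin (2 * k))) : Prop :=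
  (∀ i : Fin k, σ (lo i) < σ (hi i)) ∧ ∀ i j : Fin k, i < j → σ (lo i) < σ (lo j)

open scoped Classical in
/-- The set `M_{2k}` of coset representatives of `S_{2k}/H_k`, as a `Finset`. -/
noncomputable def Mset (k : ℕ) : Finset (Equiv.Perm (Fin (2 * k))) :=
  Finset.univ.filter MProp

/-- Reduced convolution: `(f ⋆ g)(σ) = ∑_{τ ∈ M_{2k}} f(τ) g(τ⁻¹ σ)`. -/
noncomputable def sconv {k : ℕ} {R : Type*} [CommRing R]
    (f g : Equiv.Perm (Fin (2 * k)) → R) : Equiv.Perm (Fin (2 * k)) → R :=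
  fun σ => ∑ τ ∈ Mset k, f τ * g (τ⁻¹ * σ)

open scoped Classical in
/-- The indicator function `1_k` of `H_k`. -/
noncomputable def oneH {k : ℕ} {R : Type*} [CommRing R] : Equiv.Perm (Fin (2 * k)) → R :=
  fun σ => if IsHyper σ then 1 else 0

open scoped Classical in
/-- The twisted indicator function `1_k^ε` of `H_k`: `σ ↦ ε(σ)` on `H_k`, `0` elsewhere. -/
noncomputable def oneHeps {k : ℕ} {R : Type*} [CommRing R] : Equiv.Perm (Fin (2 * k)) → R :=
  fun σ => if IsHyper σ then sgn R σ else 0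

/-- `δ_σ(i,j) = ∏_{s=1}^k δ_{i_{σ(s)}, j_s}`. -/
def deltaP {k : ℕ} {α : Type*} [DecidableEq α] {R : Type*} [CommRing R]
    (σ : Equiv.Perm (Fin k)) (i j : Fin k → α) : R :=
  ∏ s : Fin k, if i (σ s) = j s then 1 else 0

/-- `Δ_σ(i) = ∏_{s=1}^k δ_{i_{σ(2s-1)}, i_{σ(2s)}}`. -/
def DeltaO {k : ℕ} {α : Type*} [DecidableEq α] {R : Type*} [CommRing R]
    (σ : Equiv.Perm (Fin (2 * k))) (i : Fin (2 * k) → α) : R :=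
  ∏ s : Fin k, if i (σ (lo s)) = i (σ (hi s)) then 1 else 0

/-- The standard skew-symmetric matrix `J_n = ((O, I_n), (−I_n, O))`. -/
def Jmat (R : Type*) [CommRing R] (n : ℕ) : Matrix (Fin (2 * n)) (Fin (2 * n)) R :=
  Matrix.of fun p q =>
    if (p : ℕ) + n = (q : ℕ) then 1 else if (q : ℕ) + n = (p : ℕ) then -1 else 0

/-- `Δ'_σ(i) = ∏_{r=1}^k ⟨i_{σ(2r-1)}, i_{σ(2r)}⟩`, where `⟨p,q⟩` is the `(p,q)` entry
of `J_n`. -/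
def DeltaSp {k n : ℕ} (R : Type*) [CommRing R]
    (σ : Equiv.Perm (Fin (2 * k))) (i : Fin (2 * k) → Fin (2 * n)) : R :=
  ∏ s : Fin k, Jmat R n (i (σ (lo s))) (i (σ (hi s)))

/-- The signature matrix `I'_{a,n-a} = diag(I_a, −I_{n-a})`, of size `n`. -/
def Iab (R : Type*) [CommRing R] (n a : ℕ) : Matrix (Fin n) (Fin n) R :=
  Matrix.of fun p q => if p = q then (if (p : ℕ) < a then 1 else -1) else 0

/-- The signature matrix `I''_{a,n-a} = diag(I_a, −I_{n-a}, I_a, −I_{n-a})`, of size `2n`. -/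
def Ippab (R : Type*) [CommRing R] (n a : ℕ) : Matrix (Fin (2 * n)) (Fin (2 * n)) R :=
  Matrix.of fun p q => if p = q then (if (p : ℕ) % n < a then 1 else -1) else 0

/-- The unitary group `U(n)` of `n × n` complex unitary matrices. -/
abbrev UG (n : ℕ) := Matrix.unitaryGroup (Fin n) ℂ

/-- The real orthogonal group `O(n)`. -/
abbrev OG (n : ℕ) := Matrix.orthogonalGroup (Fin n) ℝ

noncomputable instance (n : ℕ) : MeasurableSpace (UG n) := borel _

noncomputable instance (n : ℕ) : MeasurableSpace (OG n) := borel _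

/-- A `2n × 2n` unitary matrix lies in the compact symplectic group `Sp(2n)`
iff `S J Sᵀ = J`. -/
def IsSymplectic {n : ℕ} (S : UG (2 * n)) : Prop :=
  (S : Matrix (Fin (2 * n)) (Fin (2 * n)) ℂ) * Jmat ℂ n
    * (S : Matrix (Fin (2 * n)) (Fin (2 * n)) ℂ)ᵀ = Jmat ℂ n

/-- The function `T^{D III}_n` on `S_{2k}`:
`σ ↦ ∑_p Δ_σ(p) ∏_{r=1}^k J_{p_{2r-1}, p_{2r}}`. -/
noncomputable def TDIII (n k : ℕ) : Equiv.Perm (Fin (2 * k)) → ℝ :=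
  fun σ => ∑ p : Fin (2 * k) → Fin (2 * n),
    DeltaO σ p * ∏ r : Fin k, Jmat ℝ n (p (lo r)) (p (hi r))

/-- The function `T^{C I}_n` on `S_{2k}`:
`σ ↦ ∑_p Δ'_σ(p) ∏_{r=1}^k (J I'_{nn})_{p_{2r-1}, p_{2r}}`. -/
noncomputable def TCI (n k : ℕ) : Equiv.Perm (Fin (2 * k)) → ℂ :=
  fun σ => ∑ p : Fin (2 * k) → Fin (2 * n),
    DeltaSp ℂ σ p * ∏ r : Fin k, (Jmat ℂ n * Iab ℂ (2 * n) n) (p (lo r)) (p (hi r))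

/-! ### The standard symplectic form -/

/-- The involution `p ↦ p ± n` of the index set that exchanges the two halves. -/
def bar {n : ℕ} (p : Fin (2 * n)) : Fin (2 * n) :=
  if h : (p : ℕ) < n then ⟨p + n, by omega⟩ else ⟨p - n, by omega⟩

/-- The sign of an index: `+1` on the first half and `-1` on the second half. -/
def hsg {n : ℕ} (p : Fin (2 * n)) : ℂ := if (p : ℕ) < n then 1 else -1

lemma bar_bar {n : ℕ} (p : Fin (2 * n)) : bar (bar p) = p := by
  ext
  unfold bar
  by_cases h : (p : ℕ) < n
  · simp [h]
  · have : (p : ℕ) - n < n := by omega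
    simp only [h, this, dif_pos, dif_neg, not_false_eq_true]
    omega

lemma hsg_bar {n : ℕ} (p : Fin (2 * n)) : hsg (bar p) = -hsg p := by
  unfold hsg bar
  by_cases h : (p : ℕ) < n
  · simp [h]
  · have : (p : ℕ) - n < n := by omega
    simp [h, this]

lemma hsg_mul_self {n : ℕ} (p : Fin (2 * n)) : hsg p * hsg p = 1 := by
  unfold hsg; split_ifs <;> norm_num

lemma Jmat_apply {n : ℕ} (p q : Fin (2 * n)) :
    Jmat ℂ n p q = if q = bar p then hsg p else 0 := by
  unfold Jmat hsg bar
  simp only [Matrix.of_apply, Fin.ext_iff]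
  by_cases h : (p : ℕ) < n
  · by_cases h2 : (p : ℕ) + n = q
    · simp [h, h2]
    · have h3 : ¬ ((q : ℕ) = p + n) := fun h' => h2 h'.symm
      have h4 : ¬ ((q : ℕ) + n = p) := by omega
      simp [h, h2, h3, h4]
  · have h1 : ¬ ((p : ℕ) + n = q) := by omega
    by_cases h2 : (q : ℕ) + n = p
    · have h3 : ((q : ℕ) = p - n) := by omega
      rw [if_neg h1, if_pos h2, if_neg h]
      simp [h, h3]
    · have h3 : ¬ ((q : ℕ) = p - n) := by omega
      simp [h, h1, h2, h3]

lemma Jmat_skew {n : ℕ} (p q : Fin (2 * n)) : Jmat ℂ n q p = -Jmat ℂ n p q := by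
  rw [Jmat_apply, Jmat_apply]
  by_cases h : q = bar p
  · subst h
    simp [bar_bar, hsg_bar]
  · have : ¬ (p = bar q) := fun h' => h (by rw [h', bar_bar])
    simp [h, this]

lemma Jmat_transpose (n : ℕ) : (Jmat ℂ n)ᵀ = -Jmat ℂ n := by
  ext p q
  simp [Jmat_skew p q]

lemma Jmat_mul_self (n : ℕ) : Jmat ℂ n * Jmat ℂ n = -1 := by
  ext p q
  rw [Matrix.mul_apply]
  simp only [Jmat_apply, ite_mul, zero_mul, Finset.sum_ite_eq',
    Finset.mem_univ, if_true, bar_bar, hsg_bar]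
  by_cases h : q = p
  · subst h
    simp [hsg_mul_self]
  · simp [h, Ne.symm h]

lemma Jmat_conjTranspose (n : ℕ) : (Jmat ℂ n)ᴴ = -Jmat ℂ n := by
  rw [← Jmat_transpose]
  ext p q
  simp only [Matrix.conjTranspose_apply, Matrix.transpose_apply, Jmat_apply, hsg]
  split_ifs <;> simp

/-- The defining relation of the symplectic group, transposed. -/
lemma symp_transpose {n : ℕ} {S : UG (2 * n)} (hS : IsSymplectic S) :
    (S : Matrix _ _ ℂ)ᵀ * Jmat ℂ n * (S : Matrix _ _ ℂ) = Jmat ℂ n := by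
  unfold IsSymplectic at hS
  set h := (S : Matrix (Fin (2 * n)) (Fin (2 * n)) ℂ)
  have h1 : (h * Jmat ℂ n) * (hᵀ * (-Jmat ℂ n)) = 1 := by
    rw [← mul_assoc, hS, mul_neg, Jmat_mul_self, neg_neg]
  have h2 := mul_eq_one_comm.mp h1
  calc hᵀ * Jmat ℂ n * h = hᵀ * (-Jmat ℂ n) * (h * Jmat ℂ n) * Jmat ℂ n := by
        simp only [mul_assoc, Jmat_mul_self, mul_neg, neg_mul, neg_neg, mul_one]
    _ = Jmat ℂ n := by rw [h2, one_mul]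

/-! ### Invariant tensors and the Lie algebra -/

/-- Tensors of degree `m` on `ℂ^{2n}` fixed by the (transposed) action of `Sp(2n)`. -/
def Inv {n m : ℕ} (f : (Fin m → Fin (2 * n)) → ℂ) : Prop :=
  ∀ h : UG (2 * n), IsSymplectic h → ∀ i,
    f i = ∑ q : Fin m → Fin (2 * n), (∏ j, (h : Matrix _ _ ℂ) (q j) (i j)) * f q

/-- The exponential of an element of the Lie algebra of `Sp(2n)` lies in `Sp(2n)`. -/
lemma exists_curve {n : ℕ} (X : Matrix (Fin (2 * n)) (Fin (2 * n)) ℂ) (hX : Xᴴ = -X)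
    (hJ : X * Jmat ℂ n + Jmat ℂ n * Xᵀ = 0) :
    ∃ g : ℝ → UG (2 * n), (∀ t, IsSymplectic (g t)) ∧
      ((g 0 : UG (2 * n)) : Matrix (Fin (2 * n)) (Fin (2 * n)) ℂ) = 1 ∧
      ∀ p q, HasDerivAt (fun t => (g t : Matrix (Fin (2 * n)) (Fin (2 * n)) ℂ) p q) (X p q) 0 := by
  have hmem : ∀ t : ℝ, NormedSpace.exp (t • X) ∈ UG (2 * n) := by
    intro t
    rw [Matrix.mem_unitaryGroup_iff', Matrix.star_eq_conjTranspose, ← Matrix.exp_conjTranspose,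
      Matrix.conjTranspose_smul, hX, star_trivial, smul_neg,
      ← Matrix.exp_add_of_commute _ _ (Commute.neg_left (Commute.refl (t • X)))]
    simp
  refine ⟨fun t => ⟨_, hmem t⟩, ?_, by simp, ?_⟩
  · intro t
    unfold IsSymplectic
    simp only
    have hu : (Jmat ℂ n) * (-Jmat ℂ n) = 1 := by rw [mul_neg, Jmat_mul_self, neg_neg]
    have hu' : (-Jmat ℂ n) * (Jmat ℂ n) = 1 := by rw [neg_mul, Jmat_mul_self, neg_neg]
    have hinv : (Jmat ℂ n)⁻¹ = -Jmat ℂ n := Matrix.inv_eq_right_inv hu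
    have hunit : IsUnit (Jmat ℂ n) := IsUnit.of_mul_eq_one _ hu
    have hc := Matrix.exp_conj (Jmat ℂ n) (t • X)ᵀ hunit
    have h1 : Jmat ℂ n * (t • X)ᵀ * (Jmat ℂ n)⁻¹ = - (t • X) := by
      rw [hinv, Matrix.transpose_smul, Matrix.mul_smul, eq_neg_of_add_eq_zero_right hJ,
        Matrix.smul_mul, neg_mul_neg, mul_assoc, Jmat_mul_self, mul_neg, mul_one, smul_neg]
    rw [h1, hinv, Matrix.exp_transpose] at hc
    have h2 : Jmat ℂ n * (NormedSpace.exp (t • X))ᵀ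
        = NormedSpace.exp (-(t • X)) * Jmat ℂ n := by
      rw [hc, mul_assoc, hu', mul_one]
    rw [mul_assoc, h2, ← mul_assoc,
      ← Matrix.exp_add_of_commute _ _ (Commute.neg_right (Commute.refl (t • X)))]
    simp
  · intro p q
    have hd : HasDerivAt (fun t : ℝ => NormedSpace.exp (t • X)) X 0 := by
      open scoped Matrix.Norms.Operator in
      have := hasDerivAt_exp_smul_const (𝕂 := ℝ) X 0
      rw [zero_smul, NormedSpace.exp_zero, one_mul] at this
      exact this
    exact hasDerivAt_pi.mp (hasDerivAt_pi.mp hd p) q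

/-- Infinitesimal invariance: the derivative of the invariance relation along a one-parameter
subgroup of `Sp(2n)`. -/
lemma inv_deriv_skew {n m : ℕ} {f : (Fin m → Fin (2 * n)) → ℂ} (hf : Inv f)
    (X : Matrix (Fin (2 * n)) (Fin (2 * n)) ℂ) (hX : Xᴴ = -X)
    (hJ : X * Jmat ℂ n + Jmat ℂ n * Xᵀ = 0) (i : Fin m → Fin (2 * n)) :
    ∑ l, ∑ r, X r (i l) * f (Function.update i l r) = 0 := by
  obtain ⟨g, hg, hg0, hgd⟩ := exists_curve X hX hJ
  have hd : HasDerivAt (fun t => ∑ q : Fin m → Fin (2 * n),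
      (∏ j, (g t : Matrix (Fin (2 * n)) (Fin (2 * n)) ℂ) (q j) (i j)) * f q)
      (∑ q : Fin m → Fin (2 * n), (∑ l, (∏ j ∈ univ.erase l,
        (g 0 : Matrix (Fin (2 * n)) (Fin (2 * n)) ℂ) (q j) (i j)) • X (q l) (i l)) * f q) 0 := by
    refine HasDerivAt.fun_sum fun q _ => ?_
    refine HasDerivAt.mul_const ?_ _
    exact HasDerivAt.fun_finsetProd fun j _ => hgd _ _
  have hc : HasDerivAt (fun t => ∑ q : Fin m → Fin (2 * n),
      (∏ j, (g t : Matrix (Fin (2 * n)) (Fin (2 * n)) ℂ) (q j) (i j)) * f q) 0 0 := by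
    have : (fun t => ∑ q : Fin m → Fin (2 * n),
      (∏ j, (g t : Matrix (Fin (2 * n)) (Fin (2 * n)) ℂ) (q j) (i j)) * f q) = fun _ => f i := by
      funext t
      exact (hf (g t) (hg t) i).symm
    rw [this]
    exact hasDerivAt_const _ _
  have hz := hd.unique hc
  rw [hg0] at hz
  simp_rw [Finset.sum_mul] at hz
  rw [Finset.sum_comm] at hz
  refine Eq.trans ?_ hz
  refine Finset.sum_congr rfl fun l _ => ?_
  refine Finset.sum_of_injOn (fun r => Function.update i l r) ?_ ?_ ?_ ?_
  · intro r _ s _ h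
    simpa using congrFun h l
  · intro r _; simp
  · intro q _ hq
    have : ∃ j ∈ univ.erase l, q j ≠ i j := by
      by_contra hcon
      push Not at hcon
      apply hq
      refine ⟨q l, by simp, ?_⟩
      funext j
      by_cases hj : j = l
      · subst hj; simp
      · simp [hj, hcon j (by simp [hj])]
    obtain ⟨j, hj, hne⟩ := this
    rw [Finset.prod_eq_zero hj (by rw [Matrix.one_apply_ne hne])]
    simp
  · intro r _
    rw [Finset.prod_eq_one]
    · simp
    · intro j hj
      have : j ≠ l := by simpa using hj
      rw [Function.update_of_ne this, Matrix.one_apply_eq]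

/-- Infinitesimal invariance extends to the complexified Lie algebra, every element of which is a
complex combination of two skew-Hermitian ones. -/
lemma inv_deriv {n m : ℕ} {f : (Fin m → Fin (2 * n)) → ℂ} (hf : Inv f)
    (Y : Matrix (Fin (2 * n)) (Fin (2 * n)) ℂ)
    (hJ : Y * Jmat ℂ n + Jmat ℂ n * Yᵀ = 0) (i : Fin m → Fin (2 * n)) :
    ∑ l, ∑ r, Y r (i l) * f (Function.update i l r) = 0 := by
  -- the Lie algebra is stable under conjugate transposition
  have hH : Yᴴ * Jmat ℂ n + Jmat ℂ n * Yᴴᵀ = 0 := by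
    have h1 := congrArg Matrix.conjTranspose hJ
    simp only [Matrix.conjTranspose_add, Matrix.conjTranspose_mul, Jmat_conjTranspose,
      Matrix.conjTranspose_zero] at h1
    have h2 : Yᵀᴴ = Yᴴᵀ := by ext p q; simp
    rw [h2] at h1
    have h3 : Jmat ℂ n * (-Jmat ℂ n * Yᴴ + Yᴴᵀ * -Jmat ℂ n) * Jmat ℂ n = 0 := by
      rw [h1]; simp
    have h4 : Jmat ℂ n * (-Jmat ℂ n * Yᴴ + Yᴴᵀ * -Jmat ℂ n) * Jmat ℂ n
        = -(Jmat ℂ n * Jmat ℂ n) * Yᴴ * Jmat ℂ n - Jmat ℂ n * Yᴴᵀ * (Jmat ℂ n * Jmat ℂ n) := by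
      noncomm_ring
    rw [h4, Jmat_mul_self] at h3
    simpa using h3
  have hA := inv_deriv_skew hf (Y - Yᴴ) (by simp) (by
    rw [sub_mul, Matrix.transpose_sub, mul_sub]
    have : Y * Jmat ℂ n - Yᴴ * Jmat ℂ n + (Jmat ℂ n * Yᵀ - Jmat ℂ n * Yᴴᵀ)
        = (Y * Jmat ℂ n + Jmat ℂ n * Yᵀ) - (Yᴴ * Jmat ℂ n + Jmat ℂ n * Yᴴᵀ) := by abel
    rw [this, hJ, hH, sub_zero]) i
  have hB := inv_deriv_skew hf (Complex.I • (Y + Yᴴ)) (by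
      simp [Matrix.conjTranspose_smul, add_comm]) (by
    rw [Matrix.smul_mul, add_mul, Matrix.transpose_smul, Matrix.transpose_add, Matrix.mul_smul,
      mul_add, ← smul_add, show Y * Jmat ℂ n + Yᴴ * Jmat ℂ n + (Jmat ℂ n * Yᵀ + Jmat ℂ n * Yᴴᵀ)
        = (Y * Jmat ℂ n + Jmat ℂ n * Yᵀ) + (Yᴴ * Jmat ℂ n + Jmat ℂ n * Yᴴᵀ) by abel, hJ, hH]
    simp) i
  have hC : (2 : ℂ) * ∑ l, ∑ r, Y r (i l) * f (Function.update i l r)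
      = ∑ l, ∑ r, (Y - Yᴴ) r (i l) * f (Function.update i l r)
        + (-Complex.I) * ∑ l, ∑ r, (Complex.I • (Y + Yᴴ)) r (i l) * f (Function.update i l r) := by
    simp_rw [Finset.mul_sum, ← Finset.sum_add_distrib]
    refine Finset.sum_congr rfl fun l _ => Finset.sum_congr rfl fun r _ => ?_
    simp only [Matrix.sub_apply, Matrix.smul_apply, Matrix.add_apply, smul_eq_mul]
    linear_combination ((Y r (i l) + Yᴴ r (i l)) * f (Function.update i l r)) * Complex.I_mul_I
  rw [hA, hB] at hC
  simpa using hC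

/-- The Casimir identity at a slot `j`. It is the sum over `v` of the infinitesimal invariance
under the Lie algebra elements `E_{p_j v} + J E_{v p_j} J`, evaluated at the index obtained from
`p` by replacing `p_j` with `v`. -/
lemma casimir {n m : ℕ} {f : (Fin m → Fin (2 * n)) → ℂ} (hf : Inv f)
    (p : Fin m → Fin (2 * n)) (j : Fin m) :
    (2 * n + 1 : ℂ) * f p + ∑ l ∈ univ.erase j, (f (p ∘ Equiv.swap j l) +
      Jmat ℂ n (p l) (p j) *
        ∑ v, ∑ r, Jmat ℂ n v r * f (Function.update (Function.update p j v) l r)) = 0 := by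
  have hY : ∀ u w : Fin (2 * n),
      (Matrix.of fun r x : Fin (2 * n) => (if x = u then (1 : ℂ) else 0) * (if r = w then 1 else 0)
        + Jmat ℂ n x w * Jmat ℂ n u r) * Jmat ℂ n + Jmat ℂ n *
      (Matrix.of fun r x : Fin (2 * n) => (if x = u then (1 : ℂ) else 0) * (if r = w then 1 else 0)
        + Jmat ℂ n x w * Jmat ℂ n u r)ᵀ = 0 := by
    intro u w
    ext x y
    have hJJ : ∀ z t, ∑ s, Jmat ℂ n z s * Jmat ℂ n s t = if z = t then (-1 : ℂ) else 0 := by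
      intro z t
      rw [← Matrix.mul_apply, Jmat_mul_self, Matrix.neg_apply, Matrix.one_apply]
      split_ifs <;> simp
    simp only [Matrix.add_apply, Matrix.mul_apply, Matrix.of_apply, Matrix.transpose_apply,
      add_mul, mul_add, Finset.sum_add_distrib, Matrix.zero_apply]
    have e1 : ∑ s, Jmat ℂ n s w * Jmat ℂ n u x * Jmat ℂ n s y
        = Jmat ℂ n u x * if w = y then 1 else 0 := by
      have := hJJ w y
      calc _ = Jmat ℂ n u x * -∑ s, Jmat ℂ n w s * Jmat ℂ n s y := by
            rw [← Finset.sum_neg_distrib, Finset.mul_sum]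
            refine Finset.sum_congr rfl fun s _ => ?_
            rw [Jmat_skew w s]; ring
        _ = _ := by rw [this]; split_ifs <;> simp
    have e2 : ∑ s, Jmat ℂ n x s * (Jmat ℂ n s w * Jmat ℂ n u y)
        = - Jmat ℂ n u y * if x = w then 1 else 0 := by
      simp_rw [← mul_assoc]
      rw [← Finset.sum_mul, hJJ]
      split_ifs <;> simp
    have e3 : ∑ s, (if s = u then (1 : ℂ) else 0) * (if x = w then 1 else 0) * Jmat ℂ n s y
        = (if x = w then 1 else 0) * Jmat ℂ n u y := by
      rw [Finset.sum_eq_single u (fun s _ hs => by simp [hs]) (by simp)]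
      simp
    have e4 : ∑ s, Jmat ℂ n x s * ((if s = u then (1 : ℂ) else 0) * (if y = w then 1 else 0))
        = -(if w = y then 1 else 0) * Jmat ℂ n u x := by
      rw [Finset.sum_eq_single u (fun s _ hs => by simp [hs]) (by simp), Jmat_skew u x]
      by_cases h : w = y
      · simp [h]
      · simp [h, Ne.symm h]
    rw [e1, e2, e3, e4]
    ring
  have hsum : ∑ v, ∑ l, ∑ r, ((if (Function.update p j v) l = v then (1 : ℂ) else 0) *
      (if r = p j then 1 else 0) + Jmat ℂ n ((Function.update p j v) l) (p j) * Jmat ℂ n v r)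
        * f (Function.update (Function.update p j v) l r) = 0 := by
    refine Finset.sum_eq_zero fun v _ => ?_
    exact inv_deriv hf _ (hY v (p j)) (Function.update p j v)
  rw [Finset.sum_comm, ← Finset.add_sum_erase _ _ (Finset.mem_univ j)] at hsum
  rw [← hsum]
  congr 1
  · simp only [Function.update_self, Function.update_idem, if_true, one_mul, add_mul,
      Finset.sum_add_distrib, ite_mul, zero_mul, Finset.sum_ite_eq', Finset.mem_univ,
      Function.update_eq_self, Finset.sum_const, Finset.card_univ, Fintype.card_fin]
    rw [Finset.sum_comm]
    simp_rw [← Finset.sum_mul]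
    have hJJ : ∀ t, ∑ s, Jmat ℂ n s (p j) * Jmat ℂ n s t = if t = p j then (1 : ℂ) else 0 := by
      intro t
      have : ∑ s, Jmat ℂ n (p j) s * Jmat ℂ n s t = if p j = t then (-1 : ℂ) else 0 := by
        rw [← Matrix.mul_apply, Jmat_mul_self, Matrix.neg_apply, Matrix.one_apply]
        split_ifs <;> simp
      simp_rw [Jmat_skew (p j), neg_mul, Finset.sum_neg_distrib, this]
      by_cases h : p j = t
      · simp [h]
      · simp [h, Ne.symm h]
    simp_rw [hJJ]
    simp
  · refine Finset.sum_congr rfl fun l hl => ?_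
    have hlj : l ≠ j := by simpa using hl
    simp only [Function.update_of_ne hlj, add_mul, Finset.sum_add_distrib]
    congr 1
    · simp only [ite_mul, one_mul, zero_mul, mul_ite, mul_one, mul_zero]
      rw [Finset.sum_eq_single (p l)]
      · simp only [if_true, Finset.sum_ite_eq', Finset.mem_univ]
        congr 1
        funext x
        by_cases h1 : x = l
        · subst h1; simp
        · by_cases h2 : x = j
          · subst h2; simp [h1]
          · simp [h1, h2, Equiv.swap_apply_of_ne_of_ne h2 h1]
      · intro v _ hv
        simp [Ne.symm hv]
      · simp
    · simp_rw [Finset.mul_sum, mul_assoc]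

/-- An invariant tensor of degree `m ≤ 2n + 1` all of whose contractions vanish is zero: at an
index where `|f|` is maximal the Casimir identity gives `(2n + 1) |f| ≤ (m - 1) |f|`. -/
lemma traceless_eq_zero {n m : ℕ} {f : (Fin m → Fin (2 * n)) → ℂ} (hf : Inv f) (hm : 0 < m)
    (hmn : m ≤ 2 * n + 1)
    (htr : ∀ p : Fin m → Fin (2 * n), ∀ j l : Fin m, j ≠ l →
      ∑ v, ∑ r, Jmat ℂ n v r * f (Function.update (Function.update p j v) l r) = 0) :
    f = 0 := by
  rcases isEmpty_or_nonempty (Fin m → Fin (2 * n)) with hE | hE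
  · exact Subsingleton.elim _ _
  obtain ⟨p, hp⟩ := Finite.exists_max fun q => ‖f q‖
  have h0 : ‖f p‖ = 0 := by
    have hc := casimir hf p ⟨0, hm⟩
    have h1 : (2 * n + 1 : ℂ) * f p =
        - ∑ l ∈ univ.erase (⟨0, hm⟩ : Fin m), f (p ∘ Equiv.swap ⟨0, hm⟩ l) := by
      rw [eq_neg_iff_add_eq_zero, ← hc]
      congr 1
      refine Finset.sum_congr rfl fun l hl => ?_
      rw [htr p _ l (by simpa using (Finset.ne_of_mem_erase hl).symm)]
      simp
    have h2 : (2 * n + 1 : ℝ) * ‖f p‖ ≤ ((m : ℝ) - 1) * ‖f p‖ := by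
      calc (2 * n + 1 : ℝ) * ‖f p‖ = ‖(2 * n + 1 : ℂ) * f p‖ := by
            rw [norm_mul]
            congr 1
            have : (2 * n + 1 : ℂ) = ((2 * n + 1 : ℕ) : ℂ) := by push_cast; ring
            rw [this, Complex.norm_natCast]
            push_cast; ring
        _ ≤ ∑ l ∈ univ.erase (⟨0, hm⟩ : Fin m), ‖f p‖ := by
            rw [h1, norm_neg]
            exact (norm_sum_le _ _).trans (Finset.sum_le_sum fun l _ => hp _)
        _ = _ := by
            rw [Finset.sum_const, Finset.card_erase_of_mem (Finset.mem_univ _), Finset.card_univ,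
              Fintype.card_fin, nsmul_eq_mul, Nat.cast_sub hm]
            simp
    have h3 : (m : ℝ) ≤ 2 * n + 1 := by exact_mod_cast hmn
    nlinarith [norm_nonneg (f p)]
  funext q
  have := hp q
  simp only [h0] at this
  simpa using this

/-! ### Contractions -/

lemma sum_vecCons {α : Type*} [Fintype α] {m : ℕ} (F : (Fin (m + 1) → α) → ℂ) :
    ∑ q, F q = ∑ u, ∑ p : Fin m → α, F (vecCons u p) := by
  rw [← Fintype.sum_prod_type' (f := fun u p => F (vecCons u p))]
  exact ((Fin.consEquiv (fun _ : Fin (m + 1) => α)).sum_comp F).symm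

lemma sum_rot {α β γ : Type*} [Fintype α] [Fintype β] [Fintype γ] (F : α → β → γ → ℂ) :
    ∑ u, ∑ v, ∑ x, F u v x = ∑ x, ∑ u, ∑ v, F u v x := by
  rw [Finset.sum_comm (γ := γ)]
  exact Finset.sum_congr rfl fun u _ => Finset.sum_comm

lemma sum_comp_perm {α : Type*} [Fintype α] {m : ℕ} (τ : Equiv.Perm (Fin m))
    (F : (Fin m → α) → ℂ) : ∑ q : Fin m → α, F (q ∘ τ) = ∑ q, F q :=
  (Equiv.arrowCongr τ.symm (Equiv.refl α)).sum_comp F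

/-- Contraction of the first two slots of a tensor with the symplectic form. -/
noncomputable def contr {n m : ℕ} (f : (Fin (m + 2) → Fin (2 * n)) → ℂ) :
    (Fin m → Fin (2 * n)) → ℂ :=
  fun p => ∑ u, ∑ v, Jmat ℂ n u v * f (vecCons u (vecCons v p))

lemma Inv.perm {n m : ℕ} {f : (Fin m → Fin (2 * n)) → ℂ} (hf : Inv f)
    (τ : Equiv.Perm (Fin m)) : Inv fun p => f (p ∘ τ) := by
  intro h hh i
  have h1 := hf h hh (i ∘ τ)
  rw [← sum_comp_perm τ] at h1
  refine h1.trans (Finset.sum_congr rfl fun q _ => ?_)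
  congr 1
  exact Equiv.prod_comp τ fun j => (h : Matrix (Fin (2 * n)) (Fin (2 * n)) ℂ) (q j) (i j)

lemma Inv.contr {n m : ℕ} {f : (Fin (m + 2) → Fin (2 * n)) → ℂ} (hf : Inv f) :
    Inv (contr f) := by
  intro h hh p
  set H := (h : Matrix (Fin (2 * n)) (Fin (2 * n)) ℂ) with hH
  have hJ : ∀ x y, ∑ u, ∑ v, H x u * Jmat ℂ n u v * H y v = Jmat ℂ n x y := by
    intro x y
    have : (H * Jmat ℂ n * Hᵀ) x y = Jmat ℂ n x y := by rw [show H * _ * _ = _ from hh]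
    rw [← this, Matrix.mul_apply, Finset.sum_comm]
    refine Finset.sum_congr rfl fun v _ => ?_
    rw [Matrix.mul_apply, Finset.sum_mul]
    rfl
  calc WgPaper.contr f p
      = ∑ u, ∑ v, ∑ x, ∑ y, ∑ q : Fin m → Fin (2 * n), (H x u * Jmat ℂ n u v * H y v) *
          ((∏ j, H (q j) (p j)) * f (vecCons x (vecCons y q))) := by
        unfold WgPaper.contr
        refine Finset.sum_congr rfl fun u _ => Finset.sum_congr rfl fun v _ => ?_
        rw [hf h hh, sum_vecCons, Finset.mul_sum]
        refine Finset.sum_congr rfl fun x _ => ?_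
        rw [sum_vecCons, Finset.mul_sum]
        refine Finset.sum_congr rfl fun y _ => ?_
        rw [Finset.mul_sum]
        refine Finset.sum_congr rfl fun q _ => ?_
        rw [Fin.prod_univ_succ, Fin.prod_univ_succ]
        simp only [cons_val_zero, cons_val_succ, ← hH]
        ring
    _ = ∑ x, ∑ y, ∑ q : Fin m → Fin (2 * n), ∑ u, ∑ v, (H x u * Jmat ℂ n u v * H y v) *
          ((∏ j, H (q j) (p j)) * f (vecCons x (vecCons y q))) := by
        rw [sum_rot]
        refine Finset.sum_congr rfl fun x _ => ?_
        rw [sum_rot]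
        exact Finset.sum_congr rfl fun y _ => sum_rot _
    _ = ∑ x, ∑ y, ∑ q : Fin m → Fin (2 * n), Jmat ℂ n x y *
          ((∏ j, H (q j) (p j)) * f (vecCons x (vecCons y q))) := by
        refine Finset.sum_congr rfl fun x _ => Finset.sum_congr rfl fun y _ =>
          Finset.sum_congr rfl fun q _ => ?_
        simp_rw [← Finset.sum_mul]
        rw [hJ]
    _ = ∑ q : Fin m → Fin (2 * n), (∏ j, H (q j) (p j)) * WgPaper.contr f q := by
        unfold WgPaper.contr
        rw [sum_rot]
        simp_rw [Finset.mul_sum]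
        refine Finset.sum_congr rfl fun q _ => Finset.sum_congr rfl fun x _ =>
          Finset.sum_congr rfl fun y _ => ?_
        ring

/-- Extension of a permutation by two fixed points at the front. -/
def ext2 {m : ℕ} (σ : Equiv.Perm (Fin m)) : Equiv.Perm (Fin (m + 2)) :=
  Equiv.Perm.decomposeFin.symm (0, Equiv.Perm.decomposeFin.symm (0, σ))

lemma DeltaSp_ext2 {n k : ℕ} (σ : Equiv.Perm (Fin (2 * k))) (u v : Fin (2 * n))
    (p : Fin (2 * k) → Fin (2 * n)) :
    DeltaSp (k := k + 1) ℂ (ext2 σ) (vecCons u (vecCons v p)) = Jmat ℂ n u v * DeltaSp ℂ σ p := by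
  unfold DeltaSp
  rw [Fin.prod_univ_succ]
  have h2 : ∀ x : Fin (2 * k), ext2 σ x.succ.succ = (σ x).succ.succ := by
    intro x; simp [ext2]
  have h3 : ∀ s : Fin k, lo s.succ = (lo s).succ.succ := by
    intro s; ext; simp [lo]; ring
  have h4 : ∀ s : Fin k, hi s.succ = (hi s).succ.succ := by
    intro s; ext; simp [hi]; ring
  refine congrArg₂ (· * ·) rfl (Finset.prod_congr rfl fun s _ => ?_)
  rw [h3, h4]
  erw [h2, h2]
  rfl

lemma exists_perm_pair {m : ℕ} (j l : Fin (m + 2)) (h : j ≠ l) :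
    ∃ τ : Equiv.Perm (Fin (m + 2)), τ j = 0 ∧ τ l = 1 := by
  refine ⟨Equiv.swap 1 (Equiv.swap 0 j l) * Equiv.swap 0 j, ?_, ?_⟩
  · have h1 : (0 : Fin (m + 2)) ≠ Equiv.swap 0 j l := by
      intro h'
      have := congrArg (Equiv.swap 0 j) h'
      simp at this
      exact h this
    simp only [Equiv.Perm.mul_apply, Equiv.swap_apply_right]
    exact Equiv.swap_apply_of_ne_of_ne (by simp) h1
  · simp

lemma DeltaSp_comp {n k : ℕ} (τ σ : Equiv.Perm (Fin (2 * k))) (i : Fin (2 * k) → Fin (2 * n)) :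
    DeltaSp ℂ σ (i ∘ τ) = DeltaSp ℂ (τ * σ) i := rfl

/-- The first fundamental theorem for `Sp(2n)` in the stable range, in dual form: an invariant
tensor of degree `2k ≤ 2n + 1` all of whose complete contractions vanish is zero. -/
lemma inv_eq_zero {n : ℕ} : ∀ k : ℕ, 2 * k ≤ 2 * n + 1 →
    ∀ f : (Fin (2 * k) → Fin (2 * n)) → ℂ, Inv f →
    (∀ σ : Equiv.Perm (Fin (2 * k)), ∑ i, DeltaSp ℂ σ i * f i = 0) → f = 0 := by
  intro k
  induction k with
  | zero =>
    intro _ f _ h0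
    have h1 := h0 1
    have : IsEmpty (Fin (2 * 0)) := Fin.isEmpty
    rw [Fintype.sum_unique] at h1
    funext q
    rw [Subsingleton.elim q default]
    simpa [DeltaSp] using h1
  | succ k ih =>
    intro hk f hf h0
    refine traceless_eq_zero hf (by omega) hk ?_
    intro p j l hjl
    obtain ⟨τ, hτj, hτl⟩ := exists_perm_pair (m := 2 * k) j l hjl
    have hz : contr (m := 2 * k) (fun q => f (q ∘ τ)) = 0 := by
      refine ih (by omega) _ (Inv.contr (hf.perm τ)) fun σ => ?_
      have h1 := h0 (τ⁻¹ * ext2 σ)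
      have h3 : ∑ q : Fin (2 * k + 2) → Fin (2 * n),
          DeltaSp (k := k + 1) ℂ (ext2 σ) q * f (q ∘ τ) = 0 := by
        rw [← h1, ← sum_comp_perm (m := 2 * (k + 1)) τ]
        refine Finset.sum_congr rfl fun q _ => ?_
        rw [DeltaSp_comp, mul_inv_cancel_left]
      rw [sum_vecCons] at h3
      simp_rw [sum_vecCons, DeltaSp_ext2] at h3
      rw [← h3]
      unfold contr
      simp_rw [Finset.mul_sum]
      rw [Finset.sum_comm]
      refine Finset.sum_congr rfl fun u _ => ?_
      rw [Finset.sum_comm]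
      refine Finset.sum_congr rfl fun v _ => Finset.sum_congr rfl fun q _ => ?_
      ring
    have h4 := congrFun hz (fun x => p (τ.symm x.succ.succ))
    unfold contr at h4
    rw [Pi.zero_apply] at h4
    rw [← h4]
    refine Finset.sum_congr rfl fun v _ => Finset.sum_congr rfl fun r _ => ?_
    congr 2
    funext x
    by_cases h1 : x = l
    · subst h1
      simp [hτl]
    · by_cases h2 : x = j
      · subst h2
        simp [hτj, h1]
      · rw [Function.update_of_ne h1, Function.update_of_ne h2]
        have h5 : τ x ≠ 0 := fun h => h2 (τ.injective (h.trans hτj.symm))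
        have h6 : τ x ≠ 1 := fun h => h1 (τ.injective (h.trans hτl.symm))
        obtain ⟨y, hy⟩ := Fin.exists_succ_eq.mpr h5
        have h7 : y ≠ 0 := by
          rintro rfl
          exact h6 hy.symm
        obtain ⟨z, hz⟩ := Fin.exists_succ_eq.mpr h7
        simp only [Function.comp_apply]
        rw [← hy, ← hz, cons_val_succ, cons_val_succ, hz, hy, Equiv.symm_apply_apply]

/-! ### The hyperoctahedral group and its coset representatives -/

lemma lo_or_hi {k : ℕ} (v : Fin (2 * k)) : ∃ s : Fin k, v = lo s ∨ v = hi s := by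
  refine ⟨⟨v / 2, by omega⟩, ?_⟩
  simp only [lo, hi, Fin.ext_iff]
  omega

lemma lo_inj {k : ℕ} {s t : Fin k} : (lo s = lo t) ↔ s = t := by
  simp only [lo, Fin.ext_iff]; omega

lemma hi_inj {k : ℕ} {s t : Fin k} : (hi s = hi t) ↔ s = t := by
  simp only [hi, Fin.ext_iff]; omega

lemma lo_ne_hi {k : ℕ} (s t : Fin k) : lo s ≠ hi t := by
  simp only [lo, hi, ne_eq, Fin.ext_iff]; omega

/-- Points of `{1, …, 2k}` as pairs: the number of the block, and whether the point is the
upper one (`true`) of its block. -/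
def pairEquiv (k : ℕ) : Fin k × Bool ≃ Fin (2 * k) where
  toFun x := if x.2 then hi x.1 else lo x.1
  invFun v := (⟨v / 2, by omega⟩, decide ((v : ℕ) % 2 = 1))
  left_inv := by
    rintro ⟨s, b⟩
    cases b
    · simp [lo]
    · simp [hi, Nat.mul_add_div]
  right_inv := by
    intro v
    by_cases h : (v : ℕ) % 2 = 1
    · simp only [h, decide_true, if_true, hi, Fin.ext_iff]; omega
    · simp only [h, decide_false, lo, Fin.ext_iff, Bool.false_eq_true, if_false]; omega

@[simp] lemma pairEquiv_false {k : ℕ} (s : Fin k) : pairEquiv k (s, false) = lo s := rfl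
@[simp] lemma pairEquiv_true {k : ℕ} (s : Fin k) : pairEquiv k (s, true) = hi s := rfl
@[simp] lemma pairEquiv_symm_lo {k : ℕ} (s : Fin k) : (pairEquiv k).symm (lo s) = (s, false) := by
  rw [Equiv.symm_apply_eq]; rfl
@[simp] lemma pairEquiv_symm_hi {k : ℕ} (s : Fin k) : (pairEquiv k).symm (hi s) = (s, true) := by
  rw [Equiv.symm_apply_eq]; rfl

/-- The permutation that permutes the blocks by `α` and, before that, reverses the blocks
selected by `β`. -/
def blk {k : ℕ} (α : Equiv.Perm (Fin k)) (β : Fin k → Bool) : Equiv.Perm (Fin (2 * k)) :=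
  (pairEquiv k).permCongr (Equiv.prodCongrLeft (fun _ => α) *
    Equiv.prodCongrRight (fun s => if β s then Equiv.boolNot else 1))

lemma blk_lo {k : ℕ} (α : Equiv.Perm (Fin k)) (β : Fin k → Bool) (s : Fin k) :
    blk α β (lo s) = if β s then hi (α s) else lo (α s) := by
  unfold blk
  cases h : β s <;> simp [Equiv.permCongr_apply, h]

lemma blk_hi {k : ℕ} (α : Equiv.Perm (Fin k)) (β : Fin k → Bool) (s : Fin k) :
    blk α β (hi s) = if β s then lo (α s) else hi (α s) := by
  unfold blk
  cases h : β s <;> simp [Equiv.permCongr_apply, h]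

lemma sgn_mul {m : ℕ} (σ τ : Equiv.Perm (Fin m)) : sgn ℂ (σ * τ) = sgn ℂ σ * sgn ℂ τ := by
  simp [sgn]

lemma sgn_mul_self {m : ℕ} (σ : Equiv.Perm (Fin m)) : sgn ℂ σ * sgn ℂ σ = 1 := by
  unfold sgn
  rcases Int.units_eq_one_or (Equiv.Perm.sign σ) with h | h <;> simp [h]

lemma sgn_inv {m : ℕ} (σ : Equiv.Perm (Fin m)) : sgn ℂ σ⁻¹ = sgn ℂ σ := by
  simp [sgn]

lemma sgn_blk {k : ℕ} (α : Equiv.Perm (Fin k)) (β : Fin k → Bool) :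
    sgn ℂ (blk α β) = ∏ s, if β s then (-1 : ℂ) else 1 := by
  have h1 : Equiv.Perm.sign (blk α β) = ∏ s, if β s then -1 else 1 := by
    unfold blk
    rw [Equiv.Perm.sign_permCongr, Equiv.Perm.sign_mul, Equiv.Perm.sign_prodCongrLeft,
      Equiv.Perm.sign_prodCongrRight]
    simp only [Finset.prod_const, Finset.card_univ, Fintype.card_bool, Int.units_sq, one_mul]
    refine Finset.prod_congr rfl fun s _ => ?_
    cases β s
    · simp
    · simp only [if_true]; decide
  unfold sgn
  rw [h1]
  push_cast
  refine Finset.prod_congr rfl fun s _ => ?_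
  cases β s <;> simp

/-- The involution exchanging the two points of every block. -/
def fl (k : ℕ) : Equiv.Perm (Fin (2 * k)) := blk 1 fun _ => true

@[simp] lemma fl_lo {k : ℕ} (s : Fin k) : fl k (lo s) = hi s := by simp [fl, blk_lo]
@[simp] lemma fl_hi {k : ℕ} (s : Fin k) : fl k (hi s) = lo s := by simp [fl, blk_hi]

lemma fl_fl {k : ℕ} (v : Fin (2 * k)) : fl k (fl k v) = v := by
  obtain ⟨s, rfl | rfl⟩ := lo_or_hi v <;> simp

lemma fl_ne {k : ℕ} (v : Fin (2 * k)) : fl k v ≠ v := by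
  obtain ⟨s, rfl | rfl⟩ := lo_or_hi v
  · simpa using (lo_ne_hi s s).symm
  · simpa using (lo_ne_hi s s)

/-- The hyperoctahedral group is the centralizer of `fl`. -/
lemma isHyper_iff {k : ℕ} (ζ : Equiv.Perm (Fin (2 * k))) :
    IsHyper ζ ↔ ∀ v, ζ (fl k v) = fl k (ζ v) := by
  constructor
  · intro h v
    have key : ∀ s : Fin k, ζ (hi s) = fl k (ζ (lo s)) := by
      intro s
      obtain ⟨j, hj⟩ := h s
      have h1 : ζ (lo s) = lo j ∨ ζ (lo s) = hi j := by
        have : ζ (lo s) ∈ ({lo j, hi j} : Finset (Fin (2 * k))) := by rw [← hj]; simp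
        simpa using this
      have h2 : ζ (hi s) = lo j ∨ ζ (hi s) = hi j := by
        have : ζ (hi s) ∈ ({lo j, hi j} : Finset (Fin (2 * k))) := by rw [← hj]; simp
        simpa using this
      have h3 : ζ (lo s) ≠ ζ (hi s) := fun h => lo_ne_hi s s (ζ.injective h)
      rcases h1 with h1 | h1 <;> rcases h2 with h2 | h2 <;> simp_all
    obtain ⟨s, rfl | rfl⟩ := lo_or_hi v
    · simp [key]
    · simp [key, fl_fl]
  · intro h s
    have h1 := h (lo s)
    rw [fl_lo] at h1
    obtain ⟨t, ht | ht⟩ := lo_or_hi (ζ (lo s))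
    · exact ⟨t, by rw [h1, ht, fl_lo]⟩
    · exact ⟨t, by rw [h1, ht, fl_hi, Finset.pair_comm]⟩

lemma isHyper_one {k : ℕ} : IsHyper (1 : Equiv.Perm (Fin (2 * k))) := by
  rw [isHyper_iff]; simp

lemma IsHyper.mul {k : ℕ} {ζ ξ : Equiv.Perm (Fin (2 * k))} (h : IsHyper ζ) (h' : IsHyper ξ) :
    IsHyper (ζ * ξ) := by
  rw [isHyper_iff] at *
  intro v
  simp [h, h']

lemma IsHyper.inv {k : ℕ} {ζ : Equiv.Perm (Fin (2 * k))} (h : IsHyper ζ) : IsHyper ζ⁻¹ := by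
  rw [isHyper_iff] at *
  intro v
  rw [Equiv.Perm.inv_eq_iff_eq, h]
  simp

lemma isHyper_blk {k : ℕ} (α : Equiv.Perm (Fin k)) (β : Fin k → Bool) : IsHyper (blk α β) := by
  rw [isHyper_iff]
  intro v
  obtain ⟨s, rfl | rfl⟩ := lo_or_hi v <;> cases h : β s <;> simp [blk_lo, blk_hi, h]

lemma IsHyper.exists_blk {k : ℕ} {ζ : Equiv.Perm (Fin (2 * k))} (h : IsHyper ζ) :
    ∃ α β, ζ = blk α β := by
  have hc := (isHyper_iff ζ).mp h
  have h1 : ∀ s : Fin k, ∃ t : Fin k, ζ (lo s) = lo t ∨ ζ (lo s) = hi t := fun s => lo_or_hi _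
  choose a ha using h1
  have hinj : Function.Injective a := by
    intro s t hst
    have hs := ha s
    have ht := ha t
    rw [← hst] at ht
    by_contra hne
    have hh : ∀ s : Fin k, ζ (hi s) = fl k (ζ (lo s)) := fun s => by rw [← hc, fl_lo]
    rcases hs with hs | hs <;> rcases ht with ht | ht
    · exact hne (lo_inj.mp (ζ.injective (hs.trans ht.symm)))
    · have := hh t
      rw [ht, fl_hi, ← hs] at this
      exact lo_ne_hi _ _ (ζ.injective this.symm)
    · have := hh t
      rw [ht, fl_lo, ← hs] at this
      exact lo_ne_hi _ _ (ζ.injective this.symm)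
    · exact hne (lo_inj.mp (ζ.injective (hs.trans ht.symm)))
  refine ⟨Equiv.ofBijective a (Finite.injective_iff_bijective.mp hinj),
    fun s => decide (ζ (lo s) = hi (a s)), ?_⟩
  have hlo : ∀ s, ζ (lo s) = blk (Equiv.ofBijective a (Finite.injective_iff_bijective.mp hinj))
    (fun s => decide (ζ (lo s) = hi (a s))) (lo s) := by
    intro s
    rw [blk_lo]
    rcases ha s with h | h
    · simp [h, lo_ne_hi]
    · simp [h]
  ext1 v
  obtain ⟨s, rfl | rfl⟩ := lo_or_hi v
  · exact hlo s
  · rw [← fl_lo, hc, hlo, (isHyper_iff _).mp (isHyper_blk _ _)]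

/-- `Δ'` is twisted-invariant under right multiplication by the hyperoctahedral group. -/
lemma DeltaSp_mul_hyper {k n : ℕ} (ρ ζ : Equiv.Perm (Fin (2 * k))) (h : IsHyper ζ)
    (i : Fin (2 * k) → Fin (2 * n)) : DeltaSp ℂ (ρ * ζ) i = sgn ℂ ζ * DeltaSp ℂ ρ i := by
  obtain ⟨α, β, rfl⟩ := h.exists_blk
  rw [sgn_blk]
  unfold DeltaSp
  rw [← Equiv.prod_comp α fun s => Jmat ℂ n (i (ρ (lo s))) (i (ρ (hi s))), ← Finset.prod_mul_distrib]
  refine Finset.prod_congr rfl fun s _ => ?_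
  simp only [Equiv.Perm.mul_apply, blk_lo, blk_hi]
  cases β s
  · simp
  · simp only [if_true]
    rw [Jmat_skew]; ring

/-- Every left coset of `H_k` meets `M_{2k}`: reverse the blocks that are mapped decreasingly,
then sort the blocks by the image of their lower point. -/
lemma exists_rep {k : ℕ} (ρ : Equiv.Perm (Fin (2 * k))) :
    ∃ ζ, IsHyper ζ ∧ ρ * ζ ∈ Mset k := by
  set ρ' := ρ * blk 1 (fun s => decide (ρ (hi s) < ρ (lo s))) with hρ'
  have h1 : ∀ s, ρ' (lo s) < ρ' (hi s) := by
    intro s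
    rw [hρ']
    simp only [Equiv.Perm.mul_apply, blk_lo, blk_hi, Equiv.Perm.one_apply]
    by_cases h : ρ (hi s) < ρ (lo s)
    · simp [h]
    · have : ρ (lo s) ≠ ρ (hi s) := fun h => lo_ne_hi s s (ρ.injective h)
      simp only [h, decide_false, Bool.false_eq_true, if_false]
      exact lt_of_le_of_ne (not_lt.mp h) this
  set α := Tuple.sort fun s => ρ' (lo s) with hα
  refine ⟨blk 1 (fun s => decide (ρ (hi s) < ρ (lo s))) * blk α (fun _ => false),
    (isHyper_blk _ _).mul (isHyper_blk _ _), ?_⟩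
  rw [← mul_assoc, ← hρ']
  simp only [Mset, Finset.mem_filter, Finset.mem_univ, true_and]
  constructor
  · intro s
    simpa [blk_lo, blk_hi] using h1 (α s)
  · intro s t hst
    have := Tuple.monotone_sort (fun s => ρ' (lo s)) hst.le
    simp only [Function.comp_apply, ← hα] at this
    simp only [Equiv.Perm.mul_apply, blk_lo, Bool.false_eq_true, if_false]
    refine lt_of_le_of_ne this fun h => hst.ne ?_
    exact α.injective (lo_inj.mp (ρ'.injective h))

/-- Every left coset of `H_k` meets `M_{2k}` at most once: `m ∈ M_{2k}` is determined by the
matching `{{m(2i-1), m(2i)}}`. -/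
lemma Mset_unique {k : ℕ} {m ζ : Equiv.Perm (Fin (2 * k))} (hm : m ∈ Mset k) (hζ : IsHyper ζ)
    (hm' : m * ζ ∈ Mset k) : m * ζ = m := by
  have hc := (isHyper_iff ζ).mp hζ
  simp only [Mset, Finset.mem_filter, Finset.mem_univ, true_and] at hm hm'
  have hr : ∀ p : Equiv.Perm (Fin (2 * k)), MProp p →
      Set.range (fun s => p (lo s)) = {v | v < p (fl k (p⁻¹ v))} := by
    intro p hp
    ext v
    constructor
    · rintro ⟨s, rfl⟩
      simpa using hp.1 s
    · intro hv
      obtain ⟨s, hs | hs⟩ := lo_or_hi (p⁻¹ v)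
      · exact ⟨s, by simp [← hs]⟩
      · have hv' : v = p (hi s) := by rw [← hs]; simp
        simp only [Set.mem_ofPred_eq, hs, fl_hi] at hv
        rw [hv'] at hv
        exact absurd (hp.1 s) (not_lt.mpr hv.le)
  have hlo : (fun s => (m * ζ) (lo s)) = fun s => m (lo s) := by
    have s1 : StrictMono fun s => (m * ζ) (lo s) := fun s t hst => hm'.2 s t hst
    have s2 : StrictMono fun s => m (lo s) := fun s t hst => hm.2 s t hst
    rw [← StrictMono.range_inj s1 s2, hr _ hm', hr _ hm]
    ext v
    simp [_root_.mul_inv_rev, hc]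
  ext1 v
  obtain ⟨s, rfl | rfl⟩ := lo_or_hi v
  · exact congrFun hlo s
  · have h1 : ζ (lo s) = lo s := m.injective (congrFun hlo s)
    rw [← fl_lo, Equiv.Perm.mul_apply, hc, h1]

/-- A right `H_k`-invariant function has the same sum over the translates of `M_{2k}`. -/
lemma sum_Mset_translate {k : ℕ} (F : Equiv.Perm (Fin (2 * k)) → ℂ)
    (hF : ∀ τ ζ, IsHyper ζ → F (τ * ζ) = F τ) (g : Equiv.Perm (Fin (2 * k))) :
    ∑ τ ∈ Mset k, F (g * τ) = ∑ τ ∈ Mset k, F τ := by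
  choose z hz hM using fun ρ => exists_rep (k := k) ρ
  have aux : ∀ g τ : Equiv.Perm (Fin (2 * k)), τ ∈ Mset k →
      g⁻¹ * (g * τ * z (g * τ)) * z (g⁻¹ * (g * τ * z (g * τ))) = τ := by
    intro g τ hτ
    have h1 : g⁻¹ * (g * τ * z (g * τ)) = τ * z (g * τ) := by group
    rw [h1, mul_assoc]
    refine Mset_unique hτ ((hz _).mul (hz _)) ?_
    rw [← mul_assoc]
    exact hM _
  refine Finset.sum_bij' (fun τ _ => g * τ * z (g * τ)) (fun τ _ => g⁻¹ * τ * z (g⁻¹ * τ))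
    (fun τ _ => hM _) (fun τ _ => hM _) (fun τ hτ => aux g τ hτ) (fun τ hτ => ?_)
    (fun τ _ => (hF _ _ (hz _)).symm)
  simpa using aux g⁻¹ τ hτ

/-! ### The components of `Γ(σ)` and the sign of `σ` -/

/-- Two fixed-point-free involutions have a common proper 2-colouring: a union of two perfect
matchings is bipartite. The colour is read off on the cycles of the product of the involutions,
which one of them exchanges in pairs. -/
lemma exists_coloring {V : Type*} [Finite V] (A B : Equiv.Perm V) (hA : ∀ v, A (A v) = v)
    (hB : ∀ v, B (B v) = v) (hA' : ∀ v, A v ≠ v) (hB' : ∀ v, B v ≠ v) :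
    ∃ χ : V → Bool, ∀ v, χ (A v) = !χ v ∧ χ (B v) = !χ v := by
  classical
  set θ := B * A with hθ
  have hAA : A⁻¹ = A := by
    ext1 v; rw [Equiv.Perm.inv_eq_iff_eq, hA]
  have hBB : B⁻¹ = B := by
    ext1 v; rw [Equiv.Perm.inv_eq_iff_eq, hB]
  have hconj : A * θ * A⁻¹ = θ⁻¹ := by
    rw [hθ, _root_.mul_inv_rev, hAA, hBB]
    ext1 v
    simp [hA]
  have hz : ∀ (j : ℤ) v, A ((θ ^ j) v) = (θ ^ (-j)) (A v) := by
    intro j v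
    have h1 : A * θ ^ j * A⁻¹ = θ ^ (-j) := by
      rw [← conj_zpow, hconj, _root_.inv_zpow, _root_.zpow_neg]
    rw [← h1]
    simp
  have hns : ∀ v, ¬ θ.SameCycle v (A v) := by
    rintro v ⟨j, hj⟩
    rcases Int.even_or_odd' j with ⟨m, hm | hm⟩
    · apply hA' ((θ ^ m) v)
      rw [hz, ← hj, ← Equiv.Perm.mul_apply, ← _root_.zpow_add]
      congr 2
      omega
    · apply hB' (A ((θ ^ m) v))
      have h2 : A ((θ ^ m) v) = (θ ^ (1 + m)) v := by
        rw [hz, ← hj, ← Equiv.Perm.mul_apply, ← _root_.zpow_add]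
        congr 2
        omega
      conv_rhs => rw [h2, _root_.zpow_add, zpow_one]
      rfl
  obtain ⟨e, he⟩ := exists_injective_nat (Quotient (Equiv.Perm.SameCycle.setoid θ))
  set q : V → Quotient (Equiv.Perm.SameCycle.setoid θ) := fun v => Quotient.mk _ v with hq
  have hq1 : ∀ v, q (B v) = q (A v) := by
    intro v
    refine Quotient.sound ?_
    have h : B v = θ (A v) := by simp [hθ, hA]
    rw [h]
    exact (Equiv.Perm.sameCycle_apply_left).mpr (Equiv.Perm.SameCycle.refl _ _)
  have hq2 : ∀ v, q (A (B v)) = q v := by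
    intro v
    refine Quotient.sound ?_
    have h : v = θ (A (B v)) := by simp [hθ, hA, hB]
    have : θ.SameCycle (A (B v)) (θ (A (B v))) :=
      (Equiv.Perm.sameCycle_apply_right).mpr (Equiv.Perm.SameCycle.refl _ _)
    rwa [← h] at this
  have hne : ∀ v, e (q v) ≠ e (q (A v)) := fun v h => hns v (Quotient.exact (he h))
  refine ⟨fun v => decide (e (q v) < e (q (A v))), fun v => ?_⟩
  have := hne v
  simp only [hq1, hq2, hA]
  constructor <;> (rw [Bool.eq_iff_iff]; simp; omega)

/-- The sign of a permutation in terms of its number of orbits. -/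
lemma sign_orbits {V : Type*} [Fintype V] [DecidableEq V] (γ : Equiv.Perm V) :
    Equiv.Perm.sign γ =
      (-1) ^ (Fintype.card V + Nat.card (Quotient (Equiv.Perm.SameCycle.setoid γ))) := by
  set h : V → Equiv.Perm V ⊕ V :=
    fun x => if γ x = x then Sum.inr x else Sum.inl (γ.cycleOf x) with hh
  have hker : Equiv.Perm.SameCycle.setoid γ = Setoid.ker h := by
    ext x y
    change γ.SameCycle x y ↔ h x = h y
    by_cases hx : γ x = x
    · by_cases hy : γ y = y
      · simp only [hh, hx, hy, if_true, Sum.inr.injEq]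
        exact ⟨fun hs => hs.eq_of_left hx, fun e => e ▸ Equiv.Perm.SameCycle.refl _ _⟩
      · simp only [hh, hx, hy, if_true, if_false, reduceCtorEq, iff_false]
        intro hs
        exact hy (hs.eq_of_left hx ▸ hx)
    · by_cases hy : γ y = y
      · simp only [hh, hx, hy, if_true, if_false, reduceCtorEq, iff_false]
        intro hs
        exact hx (hs.eq_of_right hy ▸ hy)
      · simp only [hh, hx, hy, if_false, Sum.inl.injEq]
        exact Equiv.Perm.sameCycle_iff_cycleOf_eq_of_mem_support
          (Equiv.Perm.mem_support.mpr hx) (Equiv.Perm.mem_support.mpr hy)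
  have hrange : Set.range h = ↑(γ.cycleFactorsFinset.disjSum γ.supportᶜ) := by
    ext z
    simp only [Set.mem_range, Finset.mem_coe, Finset.mem_disjSum, Finset.mem_compl,
      Equiv.Perm.mem_support, not_not]
    constructor
    · rintro ⟨x, rfl⟩
      by_cases hx : γ x = x
      · exact Or.inr ⟨x, hx, by simp [hh, hx]⟩
      · exact Or.inl ⟨γ.cycleOf x, Equiv.Perm.cycleOf_mem_cycleFactorsFinset_iff.mpr
          (Equiv.Perm.mem_support.mpr hx), by simp [hh, hx]⟩
    · rintro (⟨c, hc, rfl⟩ | ⟨x, hx, rfl⟩)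
      · obtain ⟨x, hx⟩ := (Equiv.Perm.mem_cycleFactorsFinset_iff.mp hc).1.nonempty_support
        have hx' : γ x ≠ x := by
          rw [← (Equiv.Perm.mem_cycleFactorsFinset_iff.mp hc).2 x hx]
          exact Equiv.Perm.mem_support.mp hx
        refine ⟨x, ?_⟩
        simp only [hh, hx', if_false, Sum.inl.injEq]
        exact (Equiv.Perm.cycle_is_cycleOf hx hc).symm
      · exact ⟨x, by simp [hh, hx]⟩
  have hcard : Nat.card (Quotient (Equiv.Perm.SameCycle.setoid γ)) =
      Multiset.card γ.cycleType + (Fintype.card V - γ.cycleType.sum) := by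
    rw [hker, Nat.card_congr (Setoid.quotientKerEquivRange h), hrange, Nat.card_coe_set_eq,
      Set.ncard_coe_finset, Finset.card_disjSum, Finset.card_compl, Equiv.Perm.sum_cycleType,
      Equiv.Perm.cycleType_def]
    simp
  have hle : γ.cycleType.sum ≤ Fintype.card V := by
    rw [Equiv.Perm.sum_cycleType]; exact Finset.card_le_univ _
  rw [Equiv.Perm.sign_of_cycleType, hcard]
  apply neg_one_pow_congr
  rw [Nat.even_iff, Nat.even_iff]
  omega

/-- The second perfect matching of `Γ(σ)`, as an involution. -/
def mt {k : ℕ} (σ : Equiv.Perm (Fin (2 * k))) : Equiv.Perm (Fin (2 * k)) := σ * fl k * σ⁻¹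

@[simp] lemma mt_lo {k : ℕ} (σ : Equiv.Perm (Fin (2 * k))) (s : Fin k) :
    mt σ (σ (lo s)) = σ (hi s) := by simp [mt]
@[simp] lemma mt_hi {k : ℕ} (σ : Equiv.Perm (Fin (2 * k))) (s : Fin k) :
    mt σ (σ (hi s)) = σ (lo s) := by simp [mt]

lemma mt_apply {k : ℕ} (σ : Equiv.Perm (Fin (2 * k))) (v : Fin (2 * k)) :
    mt σ (σ v) = σ (fl k v) := by simp [mt]

lemma mt_mt {k : ℕ} (σ : Equiv.Perm (Fin (2 * k))) (v : Fin (2 * k)) : mt σ (mt σ v) = v := by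
  simp [mt, fl_fl]

lemma mt_ne {k : ℕ} (σ : Equiv.Perm (Fin (2 * k))) (v : Fin (2 * k)) : mt σ v ≠ v := by
  intro h
  apply fl_ne (σ⁻¹ v)
  apply σ.injective
  simpa [mt] using h

lemma adj_iff {k : ℕ} (σ : Equiv.Perm (Fin (2 * k))) (v w : Fin (2 * k)) :
    (Gamma σ).Adj v w ↔ w = fl k v ∨ w = mt σ v := by
  unfold Gamma
  rw [SimpleGraph.fromRel_adj]
  constructor
  · rintro ⟨-, (⟨r, rfl, rfl⟩ | ⟨r, rfl, rfl⟩) | (⟨r, rfl, rfl⟩ | ⟨r, rfl, rfl⟩)⟩ <;> simp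
  · rintro (rfl | rfl)
    · refine ⟨(fl_ne v).symm, ?_⟩
      obtain ⟨s, rfl | rfl⟩ := lo_or_hi v
      · exact Or.inl (Or.inl ⟨s, by simp⟩)
      · exact Or.inr (Or.inl ⟨s, by simp⟩)
    · refine ⟨(mt_ne σ v).symm, ?_⟩
      obtain ⟨w, rfl⟩ := σ.surjective v
      obtain ⟨s, rfl | rfl⟩ := lo_or_hi w
      · exact Or.inl (Or.inr ⟨s, by simp⟩)
      · exact Or.inr (Or.inr ⟨s, by simp⟩)

/-- The component of a vertex of `Γ(σ)`. -/
abbrev cmp {k : ℕ} (σ : Equiv.Perm (Fin (2 * k))) (v : Fin (2 * k)) :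
    (Gamma σ).ConnectedComponent := (Gamma σ).connectedComponentMk v

lemma cmp_fl {k : ℕ} (σ : Equiv.Perm (Fin (2 * k))) (v : Fin (2 * k)) :
    cmp σ (fl k v) = cmp σ v :=
  SimpleGraph.ConnectedComponent.sound (((adj_iff σ v _).mpr (Or.inl rfl)).symm.reachable)

lemma cmp_mt {k : ℕ} (σ : Equiv.Perm (Fin (2 * k))) (v : Fin (2 * k)) :
    cmp σ (mt σ v) = cmp σ v :=
  SimpleGraph.ConnectedComponent.sound (((adj_iff σ v _).mpr (Or.inr rfl)).symm.reachable)

/-- A function preserved by both matchings is constant on the components of `Γ(σ)`. -/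
lemma cmp_invariant {k : ℕ} (σ : Equiv.Perm (Fin (2 * k))) {X : Type*} (g : Fin (2 * k) → X)
    (h1 : ∀ v, g (fl k v) = g v) (h2 : ∀ v, g (mt σ v) = g v) {v w : Fin (2 * k)}
    (h : cmp σ v = cmp σ w) : g v = g w := by
  obtain ⟨p⟩ := SimpleGraph.ConnectedComponent.exact h
  induction p with
  | nil => rfl
  | cons ha _ ih =>
    rw [← ih (SimpleGraph.ConnectedComponent.sound ⟨by assumption⟩)]
    rcases (adj_iff σ _ _).mp ha with rfl | rfl
    · exact (h1 _).symm
    · exact (h2 _).symm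

/-- A permutation preserving the lower and the upper points of the blocks is a pair of
permutations of the blocks. -/
lemma exists_split {k : ℕ} (π : Equiv.Perm (Fin (2 * k))) (h1 : ∀ s, ∃ t, π (lo s) = lo t)
    (h2 : ∀ s, ∃ t, π (hi s) = hi t) :
    ∃ α β : Equiv.Perm (Fin k), (∀ s, π (lo s) = lo (α s)) ∧ (∀ s, π (hi s) = hi (β s)) ∧
      Equiv.Perm.sign π = Equiv.Perm.sign α * Equiv.Perm.sign β := by
  choose a ha using h1
  choose b hb using h2
  have hai : Function.Injective a := fun s t h =>
    lo_inj.mp (π.injective (by rw [ha, ha, h]))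
  have hbi : Function.Injective b := fun s t h =>
    hi_inj.mp (π.injective (by rw [hb, hb, h]))
  set α := Equiv.ofBijective a (Finite.injective_iff_bijective.mp hai)
  set β := Equiv.ofBijective b (Finite.injective_iff_bijective.mp hbi)
  refine ⟨α, β, ha, hb, ?_⟩
  have : π = (pairEquiv k).permCongr (Equiv.prodCongrLeft (fun x => if x then β else α)) := by
    ext1 v
    obtain ⟨s, rfl | rfl⟩ := lo_or_hi v
    · rw [ha]; simp [Equiv.permCongr_apply, α]
    · rw [hb]; simp [Equiv.permCongr_apply, β]
  rw [this, Equiv.Perm.sign_permCongr, Equiv.Perm.sign_prodCongrLeft]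
  simp [mul_comm]

/-- `±1`, according to the colour of a vertex. -/
def csgn (b : Bool) : ℂ := if b then 1 else -1

/-- The sign of `σ` from a proper 2-colouring of `Γ(σ)`: after reversing blocks so that the
lower points are coloured alike, `σ` becomes a pair `(α, β)` of permutations of the blocks, and
the components of `Γ(σ)` are the orbits of `α β⁻¹`. -/
lemma sgn_eq {k : ℕ} (σ : Equiv.Perm (Fin (2 * k))) (χ : Fin (2 * k) → Bool)
    (h1 : ∀ v, χ (fl k v) = !χ v) (h2 : ∀ v, χ (mt σ v) = !χ v) :
    sgn ℂ σ = (∏ s, csgn (χ (lo s))) * (∏ s, csgn (χ (σ (lo s)))) * (-1) ^ (k + ccount σ) := by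
  set A : Equiv.Perm (Fin (2 * k)) := blk 1 fun s => !χ (lo s) with hA
  set B : Equiv.Perm (Fin (2 * k)) := blk 1 fun s => !χ (σ (lo s)) with hB
  have Alo : ∀ s, χ (A (lo s)) = true := by
    intro s
    rw [hA, blk_lo]
    cases h : χ (lo s)
    · have := h1 (lo s)
      rw [fl_lo, h] at this
      simpa using this
    · simpa using h
  have hAf : ∀ v, A (fl k v) = fl k (A v) := (isHyper_iff _).mp (isHyper_blk _ _)
  have hBf : ∀ v, B (fl k v) = fl k (B v) := (isHyper_iff _).mp (isHyper_blk _ _)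
  have Ahi : ∀ s, χ (A (hi s)) = false := by
    intro s
    rw [← fl_lo, hAf, h1, Alo]; rfl
  have hs : ∀ v, χ (σ (fl k v)) = !χ (σ v) := fun v => by rw [← mt_apply, h2]
  have Blo : ∀ s, χ (σ (B (lo s))) = true := by
    intro s
    rw [hB, blk_lo]
    cases h : χ (σ (lo s))
    · have := hs (lo s)
      rw [fl_lo, h] at this
      simpa using this
    · simpa using h
  have Bhi : ∀ s, χ (σ (B (hi s))) = false := by
    intro s
    rw [← fl_lo, hBf, hs, Blo]; rfl
  obtain ⟨α, β, hα, hβ, hsign⟩ := exists_split (A⁻¹ * σ * B)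
    (by
      intro s
      obtain ⟨t, ht | ht⟩ := lo_or_hi ((A⁻¹ * σ * B) (lo s))
      · exact ⟨t, ht⟩
      · have := Ahi t
        rw [← ht] at this
        simp [Blo] at this)
    (by
      intro s
      obtain ⟨t, ht | ht⟩ := lo_or_hi ((A⁻¹ * σ * B) (hi s))
      · have := Alo t
        rw [← ht] at this
        simp [Bhi] at this
      · exact ⟨t, ht⟩)
  have hα' : ∀ s, σ (B (lo s)) = A (lo (α s)) := fun s => by rw [← hα]; simp
  have hβ' : ∀ s, σ (B (hi s)) = A (hi (β s)) := fun s => by rw [← hβ]; simp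
  set γ := α * β⁻¹ with hγ
  have hmt : ∀ s, mt σ (A (hi s)) = A (lo (γ s)) := by
    intro s
    have := hβ' (β⁻¹ s)
    rw [show β (β⁻¹ s) = s by simp] at this
    rw [← this, mt_apply, ← hBf, fl_hi, hα']
    rfl
  have hcard : ccount σ = Nat.card (Quotient (Equiv.Perm.SameCycle.setoid γ)) := by
    set g : Fin (2 * k) → Quotient (Equiv.Perm.SameCycle.setoid γ) :=
      fun v => Quotient.mk _ ((pairEquiv k).symm v).1 with hg
    have gA : ∀ s, g (A (lo s)) = Quotient.mk _ s ∧ g (A (hi s)) = Quotient.mk _ s := by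
      intro s
      rw [hA, hg, blk_lo, blk_hi]
      cases χ (lo s) <;> simp
    have g1 : ∀ v, g (fl k v) = g v := by
      intro v
      obtain ⟨s, rfl | rfl⟩ := lo_or_hi v <;> simp [hg]
    have gγ : ∀ s, (Quotient.mk (Equiv.Perm.SameCycle.setoid γ) (γ s)) = Quotient.mk _ s :=
      fun s => Quotient.sound
        ((Equiv.Perm.sameCycle_apply_left).mpr (Equiv.Perm.SameCycle.refl _ _))
    have g2 : ∀ v, g (mt σ v) = g v := by
      intro v
      obtain ⟨w, rfl⟩ := A.surjective v
      obtain ⟨s, rfl | rfl⟩ := lo_or_hi w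
      · obtain ⟨t, rfl⟩ := γ.surjective s
        rw [← hmt, mt_mt, (gA t).2, hmt, (gA _).1, gγ]
      · rw [hmt, (gA _).1, (gA _).2, gγ]
    have hstep : ∀ s, cmp σ (A (lo (γ s))) = cmp σ (A (lo s)) := by
      intro s
      rw [← hmt, cmp_mt, ← fl_lo, hAf, cmp_fl]
    have hcomp : ∀ s t, γ.SameCycle s t → cmp σ (A (lo s)) = cmp σ (A (lo t)) := by
      intro s t hst
      have hpow : ∀ j : ℕ, cmp σ (A (lo ((γ ^ j) s))) = cmp σ (A (lo s)) := by
        intro j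
        induction j with
        | zero => rfl
        | succ j ih => rw [pow_succ', Equiv.Perm.mul_apply, hstep, ih]
      obtain ⟨j, -, rfl⟩ := hst.exists_pow_eq'
      exact (hpow j).symm
    unfold ccount
    symm
    refine Nat.card_congr (Equiv.ofBijective
      (Quotient.lift (fun s => cmp σ (A (lo s))) fun s t h => hcomp s t h) ⟨?_, ?_⟩)
    · intro x y
      induction x using Quotient.inductionOn with | h s =>
      induction y using Quotient.inductionOn with | h t =>
      intro h
      have := cmp_invariant σ g g1 g2 h
      rwa [(gA s).1, (gA t).1] at this
    · intro C
      induction C using SimpleGraph.ConnectedComponent.ind with | h v =>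
      obtain ⟨w, rfl⟩ := A.surjective v
      obtain ⟨s, rfl | rfl⟩ := lo_or_hi w
      · exact ⟨Quotient.mk _ s, rfl⟩
      · refine ⟨Quotient.mk _ s, ?_⟩
        change cmp σ (A (lo s)) = cmp σ (A (hi s))
        rw [← fl_lo, hAf, cmp_fl]
  have sA : sgn ℂ A = ∏ s, csgn (χ (lo s)) := by
    rw [hA, sgn_blk]
    refine Finset.prod_congr rfl fun s _ => ?_
    cases χ (lo s) <;> simp [csgn]
  have sB : sgn ℂ B = ∏ s, csgn (χ (σ (lo s))) := by
    rw [hB, sgn_blk]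
    refine Finset.prod_congr rfl fun s _ => ?_
    cases χ (σ (lo s)) <;> simp [csgn]
  have sγ : sgn ℂ (A⁻¹ * σ * B) = (-1) ^ (k + ccount σ) := by
    have h : Equiv.Perm.sign (A⁻¹ * σ * B) = Equiv.Perm.sign γ := by
      rw [hsign, hγ, Equiv.Perm.sign_mul, Equiv.Perm.sign_inv]
    unfold sgn
    rw [h, sign_orbits, ← hcard]
    simp
  rw [sgn_mul, sgn_mul, sgn_inv] at sγ
  rw [← sA, ← sB, ← sγ]
  linear_combination (-(sgn ℂ σ) * sgn ℂ B * sgn ℂ B) * sgn_mul_self A - sgn ℂ σ * sgn_mul_self B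

/-! ### Loop sums over `Γ(σ)` -/

/-- If `ρ` places each block inside one component of `Γ(σ)`, a component is made up of the images
of half as many blocks as it has points. -/
lemma compSize_eq {k : ℕ} (σ ρ : Equiv.Perm (Fin (2 * k)))
    [DecidableEq (Gamma σ).ConnectedComponent]
    (hρ : ∀ s, cmp σ (ρ (hi s)) = cmp σ (ρ (lo s))) (C : (Gamma σ).ConnectedComponent) :
    compSize C = 2 * (Finset.univ.filter fun s : Fin k => cmp σ (ρ (lo s)) = C).card := by
  unfold compSize
  rw [Nat.card_eq_fintype_card, Fintype.card_subtype, Finset.card_filter, Finset.card_filter,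
    ← Equiv.sum_comp ρ, ← Equiv.sum_comp (pairEquiv k), Fintype.sum_prod_type, Finset.mul_sum]
  refine Finset.sum_congr rfl fun s _ => ?_
  rw [Fintype.sum_bool, pairEquiv_true, pairEquiv_false]
  change (if cmp σ (ρ (hi s)) = C then 1 else 0) + (if cmp σ (ρ (lo s)) = C then 1 else 0) = _
  rw [hρ]
  ring

lemma prod_blocks {k : ℕ} (σ ρ : Equiv.Perm (Fin (2 * k)))
    [Fintype (Gamma σ).ConnectedComponent]
    (hρ : ∀ s, cmp σ (ρ (hi s)) = cmp σ (ρ (lo s))) (G : (Gamma σ).ConnectedComponent → ℂ) :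
    ∏ s : Fin k, G (cmp σ (ρ (lo s))) = ∏ C, G C ^ (compSize C / 2) := by
  classical
  rw [← Finset.prod_fiberwise Finset.univ (fun s : Fin k => cmp σ (ρ (lo s)))]
  refine Finset.prod_congr rfl fun C _ => ?_
  rw [compSize_eq σ ρ hρ C, Nat.mul_div_cancel_left _ (by norm_num), ← Finset.prod_const]
  refine Finset.prod_congr rfl fun s hs => ?_
  rw [(Finset.mem_filter.mp hs).2]

lemma hsg_ite {n : ℕ} (b : Bool) (x : Fin (2 * n)) :
    hsg (if b then x else bar x) = csgn b * hsg x := by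
  cases b <;> simp [csgn, hsg_bar]

/-- The nonzero terms of the sum are the index functions that are constant up to `bar` along the
components of `Γ(σ)`, so that the sum factors over the components. -/
lemma loop_sum {k n : ℕ} (σ : Equiv.Perm (Fin (2 * k)))
    [Fintype (Gamma σ).ConnectedComponent] (d : Fin (2 * n) → ℂ) (hd : ∀ x, d (bar x) = d x) :
    ∑ p : Fin (2 * k) → Fin (2 * n), DeltaSp ℂ σ p *
        ∏ s, (Jmat ℂ n (p (lo s)) (p (hi s)) * d (p (hi s))) =
      (-1) ^ (k + ccount σ) * sgn ℂ σ *
        ∏ C : (Gamma σ).ConnectedComponent, ∑ x, d x ^ (compSize C / 2) := by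
  classical
  obtain ⟨χ, hχ⟩ := exists_coloring (fl k) (mt σ) fl_fl (mt_mt σ) fl_ne (mt_ne σ)
  have h1 : ∀ v, χ (fl k v) = !χ v := fun v => (hχ v).1
  have h2 : ∀ v, χ (mt σ v) = !χ v := fun v => (hχ v).2
  have hsign : (-1) ^ (k + ccount σ) * sgn ℂ σ =
      (∏ s, csgn (χ (lo s))) * (∏ s, csgn (χ (σ (lo s)))) := by
    rw [sgn_eq σ χ h1 h2, mul_comm, mul_assoc, ← pow_add, Even.neg_one_pow ⟨_, rfl⟩, mul_one]
  rw [hsign, Fintype.prod_sum, Finset.mul_sum]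
  set E : ((Gamma σ).ConnectedComponent → Fin (2 * n)) → Fin (2 * k) → Fin (2 * n) :=
    fun q v => if χ v then q (cmp σ v) else bar (q (cmp σ v)) with hE
  have Efl : ∀ q v, E q (fl k v) = bar (E q v) := by
    intro q v
    simp only [hE, h1, cmp_fl]
    cases χ v <;> simp [bar_bar]
  have Emt : ∀ q v, E q (mt σ v) = bar (E q v) := by
    intro q v
    simp only [hE, h2, cmp_mt]
    cases χ v <;> simp [bar_bar]
  symm
  refine Finset.sum_of_injOn E ?_ (fun _ _ => by simp) ?_ ?_
  · intro q _ q' _ h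
    funext C
    induction C using SimpleGraph.ConnectedComponent.ind with | h v =>
    have := congrFun h v
    simp only [hE] at this
    cases hv : χ v
    · simp only [hv, Bool.false_eq_true, if_false] at this
      rw [← bar_bar (q _), this, bar_bar]
    · simpa [hv] using this
  · intro p _ hp
    by_contra hne
    apply hp
    have hn1 : ∀ s, p (σ (hi s)) = bar (p (σ (lo s))) := by
      intro s
      by_contra h
      apply left_ne_zero_of_mul hne
      refine Finset.prod_eq_zero (Finset.mem_univ s) ?_
      rw [Jmat_apply, if_neg h]
    have hn2 : ∀ s, p (hi s) = bar (p (lo s)) := by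
      intro s
      by_contra h
      apply right_ne_zero_of_mul hne
      refine Finset.prod_eq_zero (Finset.mem_univ s) ?_
      rw [Jmat_apply, if_neg h, zero_mul]
    have pfl : ∀ v, p (fl k v) = bar (p v) := by
      intro v
      obtain ⟨s, rfl | rfl⟩ := lo_or_hi v <;> simp [hn2, bar_bar]
    have pmt : ∀ v, p (mt σ v) = bar (p v) := by
      intro v
      obtain ⟨w, rfl⟩ := σ.surjective v
      obtain ⟨s, rfl | rfl⟩ := lo_or_hi w <;> simp [hn1, bar_bar]
    set g : Fin (2 * k) → Fin (2 * n) := fun v => if χ v then p v else bar (p v) with hg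
    have hinv : ∀ v w, cmp σ v = cmp σ w → g v = g w := by
      intro v w h
      refine cmp_invariant σ g ?_ ?_ h
      · intro v
        simp only [hg, h1, pfl]
        cases χ v <;> simp [bar_bar]
      · intro v
        simp only [hg, h2, pmt]
        cases χ v <;> simp [bar_bar]
    refine ⟨fun C => g C.out, by simp, ?_⟩
    funext v
    have hv : g (cmp σ v).out = g v := hinv _ _ (Quot.out_eq _)
    simp only [hE, hv]
    simp only [hg]
    cases χ v <;> simp [bar_bar]
  · intro q _
    have e1 : DeltaSp ℂ σ (E q) = (∏ s, csgn (χ (σ (lo s)))) *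
        ∏ C, hsg (q C) ^ (compSize C / 2) := by
      rw [← prod_blocks σ σ (fun s => by rw [← mt_lo, cmp_mt]) fun C => hsg (q C),
        ← Finset.prod_mul_distrib]
      refine Finset.prod_congr rfl fun s _ => ?_
      rw [← mt_lo, Emt, Jmat_apply, if_pos rfl, ← hsg_ite]
    have e2 : ∏ s, (Jmat ℂ n (E q (lo s)) (E q (hi s)) * d (E q (hi s))) =
        (∏ s, csgn (χ (lo s))) * ((∏ C, hsg (q C) ^ (compSize C / 2)) *
          ∏ C, d (q C) ^ (compSize C / 2)) := by
      have hb : ∀ s : Fin k, cmp σ ((1 : Equiv.Perm (Fin (2 * k))) (hi s)) =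
          cmp σ ((1 : Equiv.Perm (Fin (2 * k))) (lo s)) := fun s => by
        simp only [Equiv.Perm.one_apply]
        rw [← fl_lo, cmp_fl]
      rw [← prod_blocks σ 1 hb fun C => hsg (q C), ← prod_blocks σ 1 hb fun C => d (q C),
        ← Finset.prod_mul_distrib, ← Finset.prod_mul_distrib]
      refine Finset.prod_congr rfl fun s _ => ?_
      rw [← fl_lo, Efl, Jmat_apply, if_pos rfl, hd, ← mul_assoc, Equiv.Perm.one_apply, ← hsg_ite]
      congr 1
      simp only [hE]
      split_ifs
      · rfl
      · exact hd _
    have e3 : (∏ C : (Gamma σ).ConnectedComponent, hsg (q C) ^ (compSize C / 2)) *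
        (∏ C, hsg (q C) ^ (compSize C / 2)) = 1 := by
      rw [← Finset.prod_mul_distrib]
      refine Finset.prod_eq_one fun C _ => ?_
      rw [← mul_pow, hsg_mul_self, one_pow]
    rw [e1, e2]
    linear_combination (-(∏ s, csgn (χ (lo s))) * (∏ s, csgn (χ (σ (lo s)))) *
      ∏ C, d (q C) ^ (compSize C / 2)) * e3

lemma ccount_le {k : ℕ} (σ : Equiv.Perm (Fin (2 * k))) : ccount σ ≤ k := by
  have hs : Function.Surjective fun s : Fin k => cmp σ (lo s) := by
    intro C
    induction C using SimpleGraph.ConnectedComponent.ind with | h v =>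
    obtain ⟨s, rfl | rfl⟩ := lo_or_hi v
    · exact ⟨s, rfl⟩
    · exact ⟨s, by rw [← fl_lo]; exact (cmp_fl σ _).symm⟩
  simpa [ccount] using Nat.card_le_card_of_surjective _ hs

/-- The function `T^Sp` as a loop sum. -/
lemma loop_sum_Sp {k n : ℕ} (σ : Equiv.Perm (Fin (2 * k))) :
    ∑ p : Fin (2 * k) → Fin (2 * n), DeltaSp ℂ σ p * DeltaSp ℂ 1 p =
      (-1) ^ k * sgn ℂ σ * (-(2 * (n : ℂ))) ^ ccount σ := by
  classical
  let _ : Fintype (Gamma σ).ConnectedComponent := Fintype.ofFinite _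
  have h := loop_sum (n := n) σ (fun _ => 1) (fun _ => rfl)
  simp only [mul_one, one_pow, Finset.sum_const, Finset.card_univ, Fintype.card_fin,
    Finset.prod_const, nsmul_eq_mul] at h
  have hc : Fintype.card (Gamma σ).ConnectedComponent = ccount σ := by
    rw [ccount, Nat.card_eq_fintype_card]
  rw [hc] at h
  refine h.trans ?_
  rw [neg_pow (2 * (n : ℂ)), pow_add]
  push_cast
  ring

/-- The diagonal of the signature matrix `I''_{ab}`. -/
def dsg (a b : ℕ) (x : Fin (2 * (a + b))) : ℂ := if (x : ℕ) % (a + b) < a then 1 else -1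

lemma dsg_bar (a b : ℕ) (x : Fin (2 * (a + b))) : dsg a b (bar x) = dsg a b x := by
  unfold dsg bar
  by_cases h : (x : ℕ) < a + b
  · simp [h]
  · rw [dif_neg h]
    have : (x : ℕ) = (x - (a + b)) + (a + b) := by omega
    conv_rhs => rw [this, Nat.add_mod_right]

lemma dsg_sq (a b : ℕ) (x : Fin (2 * (a + b))) : dsg a b x ^ 2 = 1 := by
  unfold dsg; split_ifs <;> norm_num

lemma sum_dsg (a b : ℕ) : ∑ x, dsg a b x = 2 * ((a : ℂ) - b) := by
  set f : ℕ → ℂ := fun j => if j % (a + b) < a then 1 else -1 with hf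
  have h0 : ∑ j ∈ Finset.range (a + b), f j = (a : ℂ) - b := by
    rw [Finset.sum_range_add]
    have e1 : ∀ j ∈ Finset.range a, f j = 1 := by
      intro j hj
      have := Finset.mem_range.mp hj
      simp only [hf]
      rw [Nat.mod_eq_of_lt (by omega), if_pos this]
    have e2 : ∀ j ∈ Finset.range b, f (a + j) = -1 := by
      intro j hj
      have := Finset.mem_range.mp hj
      simp only [hf]
      rw [Nat.mod_eq_of_lt (by omega), if_neg (by omega)]
    rw [Finset.sum_congr rfl e1, Finset.sum_congr rfl e2]
    simp
    ring
  calc ∑ x, dsg a b x = ∑ j ∈ Finset.range (2 * (a + b)), f j :=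
        Fin.sum_univ_eq_sum_range f (2 * (a + b))
    _ = _ := by
      rw [two_mul, Finset.sum_range_add]
      have : ∀ j, f (a + b + j) = f j := by
        intro j
        simp only [hf, Nat.add_mod_left]
      simp only [this, h0]
      ring

lemma mul_Ippab (a b : ℕ) (p q : Fin (2 * (a + b))) :
    (Jmat ℂ (a + b) * Ippab ℂ (a + b) a) p q = Jmat ℂ (a + b) p q * dsg a b q := by
  rw [Matrix.mul_apply, Finset.sum_eq_single q]
  · simp [Ippab, dsg]
  · intro x _ hx
    simp [Ippab, hx]
  · simp

/-- The function `T^CII` as a loop sum. -/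
lemma loop_sum_CII {k : ℕ} (a b : ℕ) (σ : Equiv.Perm (Fin (2 * k))) :
    ∑ p : Fin (2 * k) → Fin (2 * (a + b)), DeltaSp ℂ σ p *
        ∏ s, (Jmat ℂ (a + b) * Ippab ℂ (a + b) a) (p (lo s)) (p (hi s)) =
      (-1 : ℂ) ^ (k - ccount σ) * sgn ℂ σ * 2 ^ ccount σ *
              ((a : ℂ) + b) ^ ecomp σ * ((a : ℂ) - b) ^ ocomp σ := by
  classical
  let _ : Fintype (Gamma σ).ConnectedComponent := Fintype.ofFinite _
  have h := loop_sum (n := a + b) σ (dsg a b) (dsg_bar a b)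
  simp only [mul_Ippab]
  rw [h]
  have hC : ∀ C : (Gamma σ).ConnectedComponent, ∑ x, dsg a b x ^ (compSize C / 2) =
      2 * ((if compSize C % 4 = 0 then (a : ℂ) + b else 1) *
        (if compSize C % 4 = 2 then (a : ℂ) - b else 1)) := by
    intro C
    have heven : compSize C % 2 = 0 := by
      rw [compSize_eq σ 1 (fun s => by
        simp only [Equiv.Perm.one_apply]
        rw [← fl_lo, cmp_fl]) C]
      omega
    by_cases h4 : compSize C % 4 = 0
    · have e : compSize C / 2 = 2 * (compSize C / 4) := by omega
      have h2 : compSize C % 4 ≠ 2 := by omega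
      simp only [e, pow_mul, dsg_sq, one_pow, if_pos h4, if_neg h2]
      simp
    · have h2 : compSize C % 4 = 2 := by omega
      have e : compSize C / 2 = 2 * (compSize C / 4) + 1 := by omega
      simp only [e, pow_succ _ (2 * _), pow_mul, dsg_sq, one_pow, one_mul, sum_dsg, if_neg h4,
        if_pos h2]
  have hsign : (-1 : ℂ) ^ (k - ccount σ) = (-1) ^ (k + ccount σ) := by
    have := ccount_le σ
    apply neg_one_pow_congr
    rw [Nat.even_iff, Nat.even_iff]
    omega
  simp only [hC]
  rw [Finset.prod_mul_distrib, Finset.prod_mul_distrib, Finset.prod_ite, Finset.prod_ite, hsign]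
  simp only [Finset.prod_const, one_pow, mul_one, Finset.card_univ]
  have hc : Fintype.card (Gamma σ).ConnectedComponent = ccount σ := by
    rw [ccount, Nat.card_eq_fintype_card]
  have he : (Finset.univ.filter fun C : (Gamma σ).ConnectedComponent =>
      compSize C % 4 = 0).card = ecomp σ := by
    rw [ecomp, Nat.card_eq_fintype_card, Fintype.card_subtype]
  have ho : (Finset.univ.filter fun C : (Gamma σ).ConnectedComponent =>
      compSize C % 4 = 2).card = ocomp σ := by
    rw [ocomp, Nat.card_eq_fintype_card, Fintype.card_subtype]
  rw [hc, he, ho]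
  ring

/-! ### The Gram matrix of the invariants `Δ'_σ` and its inverse -/

/-- The Gram matrix of the tensors `Δ'_σ` is given by `T^Sp`. -/
lemma gram {k n : ℕ} (ρ σ : Equiv.Perm (Fin (2 * k))) :
    ∑ i : Fin (2 * k) → Fin (2 * n), DeltaSp ℂ σ i * DeltaSp ℂ ρ i =
      (-1) ^ k * sgn ℂ (ρ⁻¹ * σ) * (-(2 * (n : ℂ))) ^ ccount (ρ⁻¹ * σ) := by
  rw [← loop_sum_Sp, ← sum_comp_perm ρ fun p => DeltaSp ℂ (ρ⁻¹ * σ) p * DeltaSp ℂ 1 p]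
  refine Finset.sum_congr rfl fun q _ => ?_
  rw [DeltaSp_comp, DeltaSp_comp, mul_inv_cancel_left, mul_one]

/-- The Weingarten matrix is a left inverse of the Gram matrix as well, so that convolution with
the Weingarten function followed by the Gram matrix is the identity on `M_{2k}`. -/
lemma sconv_gram {k : ℕ} (T W f : Equiv.Perm (Fin (2 * k)) → ℂ)
    (hT : ∀ τ ζ, IsHyper ζ → T (τ * ζ) = sgn ℂ ζ * T τ)
    (hbi : ∀ (σ ζ ζ' : Equiv.Perm (Fin (2 * k))), IsHyper ζ → IsHyper ζ' →
      W (ζ * σ * ζ') = sgn ℂ ζ * sgn ℂ ζ' * W σ)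
    (hW : sconv T W = oneHeps) (ρ : Equiv.Perm (Fin (2 * k))) (hρ : ρ ∈ Mset k) :
    ∑ σ ∈ Mset k, sconv f W σ * T (σ⁻¹ * ρ) = f ρ := by
  classical
  set G : Matrix {x // x ∈ Mset k} {x // x ∈ Mset k} ℂ :=
    Matrix.of fun ρ σ => T (ρ.1⁻¹ * σ.1) with hG
  set V : Matrix {x // x ∈ Mset k} {x // x ∈ Mset k} ℂ :=
    Matrix.of fun ρ σ => W (ρ.1⁻¹ * σ.1) with hV
  have hGV : G * V = 1 := by
    ext ρ τ
    rw [Matrix.mul_apply]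
    simp only [hG, hV, Matrix.of_apply]
    rw [Finset.sum_coe_sort (Mset k) fun σ => T (ρ.1⁻¹ * σ) * W (σ⁻¹ * τ.1)]
    have h1 := sum_Mset_translate (fun x => T x * W (x⁻¹ * (ρ.1⁻¹ * τ.1))) (by
      intro x ζ hζ
      have h2 := hbi (x⁻¹ * (ρ.1⁻¹ * τ.1)) ζ⁻¹ 1 hζ.inv isHyper_one
      have h3 : sgn ℂ (1 : Equiv.Perm (Fin (2 * k))) = 1 := by simp [sgn]
      rw [mul_one, h3, mul_one, sgn_inv] at h2
      rw [hT x ζ hζ, _root_.mul_inv_rev, mul_assoc ζ⁻¹, h2]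
      linear_combination T x * W (x⁻¹ * (ρ.1⁻¹ * τ.1)) * sgn_mul_self ζ) ρ.1⁻¹
    have h4 := congrFun hW (ρ.1⁻¹ * τ.1)
    simp only [sconv] at h4
    rw [h4] at h1
    refine (Finset.sum_congr rfl fun σ _ => ?_).trans (h1.trans ?_)
    · congr 2
      group
    · rw [Matrix.one_apply]
      by_cases hρτ : ρ = τ
      · subst hρτ
        simp [oneHeps, isHyper_one, sgn]
      · rw [if_neg hρτ, oneHeps, if_neg]
        intro hH
        apply hρτ
        have h5 : ρ.1 * (ρ.1⁻¹ * τ.1) = τ.1 := by group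
        have h6 := Mset_unique ρ.2 hH (by rw [h5]; exact τ.2)
        rw [h5] at h6
        exact Subtype.ext h6.symm
  have hVG : V * G = 1 := mul_eq_one_comm.mp hGV
  have hent : ∀ τ ∈ Mset k, ∑ σ ∈ Mset k, W (τ⁻¹ * σ) * T (σ⁻¹ * ρ) =
      if τ = ρ then 1 else 0 := by
    intro τ hτ
    have := congrFun (congrFun hVG ⟨τ, hτ⟩) ⟨ρ, hρ⟩
    rw [Matrix.mul_apply, Matrix.one_apply] at this
    simp only [hG, hV, Matrix.of_apply, Subtype.mk.injEq] at this
    rwa [Finset.sum_coe_sort (Mset k) fun σ => W (τ⁻¹ * σ) * T (σ⁻¹ * ρ)] at this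
  calc ∑ σ ∈ Mset k, sconv f W σ * T (σ⁻¹ * ρ)
      = ∑ τ ∈ Mset k, f τ * ∑ σ ∈ Mset k, W (τ⁻¹ * σ) * T (σ⁻¹ * ρ) := by
        simp only [sconv, Finset.sum_mul, Finset.mul_sum]
        rw [Finset.sum_comm]
        exact Finset.sum_congr rfl fun τ _ => Finset.sum_congr rfl fun σ _ => by ring
    _ = ∑ τ ∈ Mset k, f τ * (if τ = ρ then 1 else 0) :=
        Finset.sum_congr rfl fun τ hτ => by rw [hent τ hτ]
    _ = f ρ := by simp [hρ]

/-! ### Tensor powers and their Haar average -/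

lemma prod_pairs {k : ℕ} (f : Fin (2 * k) → ℂ) : ∏ j, f j = ∏ s : Fin k, f (lo s) * f (hi s) := by
  rw [← Equiv.prod_comp (pairEquiv k), Fintype.prod_prod_type]
  refine Finset.prod_congr rfl fun s _ => ?_
  rw [Fintype.prod_bool, pairEquiv_true, pairEquiv_false, mul_comm]

/-- Expansion of a product of entries of `Mᵀ K M`. -/
lemma quad_expand {k N : ℕ} (M K : Matrix (Fin N) (Fin N) ℂ) (ρ : Equiv.Perm (Fin (2 * k)))
    (i : Fin (2 * k) → Fin N) :
    ∏ s, (Mᵀ * K * M) (i (ρ (lo s))) (i (ρ (hi s))) =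
      ∑ p : Fin (2 * k) → Fin N, (∏ s, K (p (ρ (lo s))) (p (ρ (hi s)))) * ∏ j, M (p j) (i j) := by
  have h1 : ∀ i : Fin (2 * k) → Fin N, ∏ s, (Mᵀ * K * M) (i (lo s)) (i (hi s)) =
      ∑ p : Fin (2 * k) → Fin N, (∏ s, K (p (lo s)) (p (hi s))) * ∏ j, M (p j) (i j) := by
    intro i
    have hent : ∀ x y, (Mᵀ * K * M) x y = ∑ u : Fin N × Fin N, K u.1 u.2 * (M u.1 x * M u.2 y) := by
      intro x y
      rw [Matrix.mul_apply, Fintype.sum_prod_type_right]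
      refine Finset.sum_congr rfl fun v _ => ?_
      rw [Matrix.mul_apply, Finset.sum_mul]
      refine Finset.sum_congr rfl fun u _ => ?_
      rw [Matrix.transpose_apply]
      ring
    simp only [hent]
    rw [Fintype.prod_sum]
    let e : (Fin (2 * k) → Fin N) ≃ (Fin k → Fin N × Fin N) :=
      { toFun := fun p s => (p (lo s), p (hi s))
        invFun := fun u v => if ((pairEquiv k).symm v).2 then (u ((pairEquiv k).symm v).1).2
          else (u ((pairEquiv k).symm v).1).1
        left_inv := by
          intro p
          funext v
          obtain ⟨s, rfl | rfl⟩ := lo_or_hi v <;> simp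
        right_inv := by
          intro u
          funext s
          simp }
    rw [← Equiv.sum_comp e]
    refine Finset.sum_congr rfl fun p _ => ?_
    rw [Finset.prod_mul_distrib, prod_pairs]
    rfl
  have h2 := h1 (i ∘ ρ)
  simp only [Function.comp_apply] at h2
  rw [h2, ← sum_comp_perm ρ]
  refine Finset.sum_congr rfl fun p _ => ?_
  congr 1
  exact Equiv.prod_comp ρ fun j => M (p j) (i j)

lemma DeltaSp_symp {k n : ℕ} {S : UG (2 * n)} (hS : IsSymplectic S)
    (ρ : Equiv.Perm (Fin (2 * k))) (p : Fin (2 * k) → Fin (2 * n)) :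
    ∑ i, DeltaSp ℂ ρ i * ∏ j, S.1 (p j) (i j) = DeltaSp ℂ ρ p := by
  have h := quad_expand (S.1)ᵀ (Jmat ℂ n) ρ p
  rw [Matrix.transpose_transpose, show S.1 * Jmat ℂ n * (S.1)ᵀ = Jmat ℂ n from hS] at h
  exact h.symm

lemma DeltaSp_Inv {k n : ℕ} (ρ : Equiv.Perm (Fin (2 * k))) :
    Inv (fun i : Fin (2 * k) → Fin (2 * n) => DeltaSp ℂ ρ i) := by
  intro h hh i
  have h' := quad_expand h.1 (Jmat ℂ n) ρ i
  rw [symp_transpose hh] at h'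
  refine h'.trans (Finset.sum_congr rfl fun p _ => mul_comm _ _)

/-- The `m`-th tensor power of a matrix. -/
def kron {N : ℕ} (m : ℕ) (M : Matrix (Fin N) (Fin N) ℂ) :
    Matrix (Fin m → Fin N) (Fin m → Fin N) ℂ :=
  Matrix.of fun p q => ∏ j, M (p j) (q j)

lemma kron_mul {N m : ℕ} (M M' : Matrix (Fin N) (Fin N) ℂ) :
    kron m (M * M') = kron m M * kron m M' := by
  ext p q
  simp only [kron, Matrix.mul_apply, Matrix.of_apply]
  rw [Fintype.prod_sum]
  exact Finset.sum_congr rfl fun r _ => Finset.prod_mul_distrib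

lemma kron_conjTranspose {N m : ℕ} (M : Matrix (Fin N) (Fin N) ℂ) :
    (kron m M)ᴴ = kron m Mᴴ := by
  ext p q
  simp [kron, Matrix.conjTranspose_apply]

lemma IsSymplectic.inv {n : ℕ} {S : UG (2 * n)} (hS : IsSymplectic S) : IsSymplectic S⁻¹ := by
  unfold IsSymplectic at *
  have h1 : (S⁻¹).1 * S.1 = 1 := congrArg Subtype.val (inv_mul_cancel S)
  have h2 : (S.1)ᵀ * ((S⁻¹).1)ᵀ = 1 := by rw [← Matrix.transpose_mul, h1, Matrix.transpose_one]
  calc (S⁻¹).1 * Jmat ℂ n * ((S⁻¹).1)ᵀ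
      = (S⁻¹).1 * (S.1 * Jmat ℂ n * (S.1)ᵀ) * ((S⁻¹).1)ᵀ := by rw [hS]
    _ = ((S⁻¹).1 * S.1) * Jmat ℂ n * ((S.1)ᵀ * ((S⁻¹).1)ᵀ) := by simp only [Matrix.mul_assoc]
    _ = Jmat ℂ n := by rw [h1, h2]; simp

instance borelSpace_UG (n : ℕ) : BorelSpace (UG n) := ⟨rfl⟩

lemma continuous_entry {N : ℕ} (p q : Fin N) : Continuous fun S : UG N => S.1 p q :=
  (continuous_apply_apply p q).comp continuous_subtype_val

lemma continuous_kron {N m : ℕ} (p q : Fin m → Fin N) :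
    Continuous fun S : UG N => kron m S.1 p q := by
  simp only [kron, Matrix.of_apply]
  exact continuous_finsetProd _ fun j _ => continuous_entry _ _

lemma integrable_kron {N m : ℕ} (μ : Measure (UG N)) [IsProbabilityMeasure μ]
    (p q : Fin m → Fin N) : Integrable (fun S : UG N => kron m S.1 p q) μ := by
  refine Integrable.of_bound (C := 1) (continuous_kron p q).aestronglyMeasurable
    (Filter.Eventually.of_forall fun S => ?_)
  simp only [kron, Matrix.of_apply, norm_prod]
  exact Finset.prod_le_one (fun _ _ => norm_nonneg _)
    fun j _ => entry_norm_bound_of_unitary S.2 _ _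

lemma ae_symplectic {n : ℕ} (μ : Measure (UG (2 * n))) [IsProbabilityMeasure μ]
    (hsupp : μ {S : UG (2 * n) | IsSymplectic S} = 1) : ∀ᵐ S ∂μ, IsSymplectic S := by
  have hc : IsClosed {S : UG (2 * n) | IsSymplectic S} := by
    unfold IsSymplectic
    refine isClosed_eq ?_ continuous_const
    have : Continuous fun S : UG (2 * n) => S.1 := continuous_subtype_val
    exact (this.matrix_mul continuous_const).matrix_mul this.matrix_transpose
  exact (mem_ae_iff_prob_eq_one hc.measurableSet).mpr hsupp

/-- The mean of the tensor power of a random unitary matrix. -/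
noncomputable def avg {N : ℕ} (m : ℕ) (μ : Measure (UG N)) :
    Matrix (Fin m → Fin N) (Fin m → Fin N) ℂ :=
  Matrix.of fun p q => ∫ S : UG N, kron m S.1 p q ∂μ

lemma mul_avg {N m : ℕ} (μ : Measure (UG N)) [IsProbabilityMeasure μ]
    (B : Matrix (Fin m → Fin N) (Fin m → Fin N) ℂ) (p q : Fin m → Fin N) :
    (B * avg m μ) p q = ∫ S : UG N, (B * kron m S.1) p q ∂μ := by
  simp only [Matrix.mul_apply, avg, Matrix.of_apply]
  rw [integral_finsetSum _ fun r _ => (integrable_kron μ r q).const_mul _]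
  exact Finset.sum_congr rfl fun r _ => (integral_const_mul _ _).symm

/-- The mean tensor power absorbs symplectic factors on the left, by invariance of the measure. -/
lemma kron_mul_avg {n m : ℕ} (μ : Measure (UG (2 * n))) [IsProbabilityMeasure μ]
    (hμ : ∀ g : UG (2 * n), IsSymplectic g → μ.map (fun x => g * x) = μ)
    {h : UG (2 * n)} (hh : IsSymplectic h) : kron m h.1 * avg m μ = avg m μ := by
  ext p q
  rw [mul_avg]
  have hm : Measurable fun x : UG (2 * n) => h * x := (continuous_const_mul h).measurable
  have h1 : ∫ S : UG (2 * n), kron m S.1 p q ∂μ =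
      ∫ S : UG (2 * n), kron m S.1 p q ∂(μ.map fun x => h * x) := by rw [hμ h hh]
  rw [integral_map hm.aemeasurable (continuous_kron p q).aestronglyMeasurable] at h1
  refine Eq.trans ?_ h1.symm
  simp only [← kron_mul]
  rfl

/-- The mean absorbs symplectic factors on the right as well: left invariance makes it a
self-adjoint projection. -/
lemma avg_mul_kron {n m : ℕ} (μ : Measure (UG (2 * n))) [IsProbabilityMeasure μ]
    (hsupp : μ {S : UG (2 * n) | IsSymplectic S} = 1)
    (hμ : ∀ g : UG (2 * n), IsSymplectic g → μ.map (fun x => g * x) = μ)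
    {h : UG (2 * n)} (hh : IsSymplectic h) : avg m μ * kron m h.1 = avg m μ := by
  have h1 : ∀ S : UG (2 * n), IsSymplectic S → (avg m μ)ᴴ * kron m S.1 = (avg m μ)ᴴ := by
    intro S hS
    have := congrArg Matrix.conjTranspose (kron_mul_avg (m := m) μ hμ hS.inv)
    rw [Matrix.conjTranspose_mul, kron_conjTranspose] at this
    have h2 : ((S⁻¹).1)ᴴ = S.1 := by
      change star (star S.1) = S.1
      rw [star_star]
    rwa [h2] at this
  have h2 : (avg m μ)ᴴ * avg m μ = (avg m μ)ᴴ := by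
    ext p q
    rw [mul_avg]
    have : ∀ᵐ S ∂μ, ((avg m μ)ᴴ * kron m S.1) p q = (avg m μ)ᴴ p q := by
      filter_upwards [ae_symplectic μ hsupp] with S hS
      rw [h1 S hS]
    rw [integral_congr_ae this]
    simp
  have h3 : (avg m μ)ᴴ = avg m μ := by
    have := congrArg Matrix.conjTranspose h2
    rw [Matrix.conjTranspose_mul, Matrix.conjTranspose_conjTranspose, h2] at this
    exact this
  have := h1 h hh
  rwa [h3] at this

/-- The moments of `Sᵀ K S` in terms of the mean tensor power. -/
lemma integral_quad {N k : ℕ} (μ : Measure (UG N)) [IsProbabilityMeasure μ]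
    (K : Matrix (Fin N) (Fin N) ℂ) (i : Fin (2 * k) → Fin N) :
    ∫ S : UG N, ∏ s : Fin k, ((S.1)ᵀ * K * S.1) (i (lo s)) (i (hi s)) ∂μ =
      ∑ p : Fin (2 * k) → Fin N, (∏ s, K (p (lo s)) (p (hi s))) * avg (2 * k) μ p i := by
  have h : ∀ S : UG N, ∏ s : Fin k, ((S.1)ᵀ * K * S.1) (i (lo s)) (i (hi s)) =
      ∑ p : Fin (2 * k) → Fin N, (∏ s, K (p (lo s)) (p (hi s))) * kron (2 * k) S.1 p i :=
    fun S => quad_expand S.1 K 1 i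
  simp only [h]
  rw [integral_finsetSum _ fun r _ => (integrable_kron μ r i).const_mul _]
  exact Finset.sum_congr rfl fun r _ => integral_const_mul _ _

lemma integral_quad_Inv {n k : ℕ} (μ : Measure (UG (2 * n))) [IsProbabilityMeasure μ]
    (hsupp : μ {S : UG (2 * n) | IsSymplectic S} = 1)
    (hμ : ∀ g : UG (2 * n), IsSymplectic g → μ.map (fun x => g * x) = μ)
    (K : Matrix (Fin (2 * n)) (Fin (2 * n)) ℂ) :
    Inv fun i : Fin (2 * k) → Fin (2 * n) =>
      ∑ p : Fin (2 * k) → Fin (2 * n), (∏ s, K (p (lo s)) (p (hi s))) * avg (2 * k) μ p i := by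
  intro h hh i
  simp only [Finset.mul_sum]
  rw [Finset.sum_comm]
  refine Finset.sum_congr rfl fun p _ => ?_
  have := congrFun (congrFun (avg_mul_kron (m := 2 * k) μ hsupp hμ hh) p) i
  rw [← this, Matrix.mul_apply, Finset.mul_sum]
  refine Finset.sum_congr rfl fun q _ => ?_
  simp only [kron, Matrix.of_apply]
  ring

lemma contract_avg {n k : ℕ} (μ : Measure (UG (2 * n))) [IsProbabilityMeasure μ]
    (hsupp : μ {S : UG (2 * n) | IsSymplectic S} = 1)
    (ρ : Equiv.Perm (Fin (2 * k))) (p : Fin (2 * k) → Fin (2 * n)) :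
    ∑ i, DeltaSp ℂ ρ i * avg (2 * k) μ p i = DeltaSp ℂ ρ p := by
  have h1 : ∑ i, DeltaSp ℂ ρ i * avg (2 * k) μ p i =
      ∫ S : UG (2 * n), ∑ i, DeltaSp ℂ ρ i * kron (2 * k) S.1 p i ∂μ := by
    rw [integral_finsetSum _ fun r _ => (integrable_kron μ p r).const_mul _]
    exact Finset.sum_congr rfl fun r _ => (integral_const_mul _ _).symm
  rw [h1]
  have : ∀ᵐ S ∂μ, ∑ i, DeltaSp ℂ ρ i * kron (2 * k) S.1 p i = DeltaSp ℂ ρ p := by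
    filter_upwards [ae_symplectic μ hsupp] with S hS
    exact DeltaSp_symp hS ρ p
  rw [integral_congr_ae this]
  simp

/-- Weingarten calculus for class C II, Theorem 4.3:
`W̃ = Sᵀ J I''_{ab} S`. -/
theorem stmt14 (a b k : ℕ) (hb : 1 ≤ b) (hab : b ≤ a) (hk : 0 < k) (hnk : k ≤ a + b)
    (μ : Measure (UG (2 * (a + b)))) [IsProbabilityMeasure μ]
    (hsupp : μ {S : UG (2 * (a + b)) | IsSymplectic S} = 1)
    (hμ : ∀ g : UG (2 * (a + b)), IsSymplectic g → μ.map (fun x => g * x) = μ)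
    (WgSp : Equiv.Perm (Fin (2 * k)) → ℂ)
    (hbi : ∀ (σ ζ ζ' : Equiv.Perm (Fin (2 * k))), IsHyper ζ → IsHyper ζ' →
      WgSp (ζ * σ * ζ') = sgn ℂ ζ * sgn ℂ ζ' * WgSp σ)
    (hWg : sconv
        (fun σ => (-1 : ℂ) ^ k * sgn ℂ σ * (-(2 * ((a : ℂ) + b))) ^ ccount σ) WgSp
      = oneHeps)
    (i : Fin (2 * k) → Fin (2 * (a + b))) :
    ∫ S : UG (2 * (a + b)), ∏ s : Fin k,
        ((S : Matrix (Fin (2 * (a + b))) (Fin (2 * (a + b))) ℂ)ᵀ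
          * (Jmat ℂ (a + b) * Ippab ℂ (a + b) a)
          * (S : Matrix (Fin (2 * (a + b))) (Fin (2 * (a + b))) ℂ)) (i (lo s)) (i (hi s)) ∂μ
      = ∑ σ ∈ Mset k, DeltaSp ℂ σ i *
          sconv (fun τ => (-1 : ℂ) ^ (k - ccount τ) * sgn ℂ τ * 2 ^ ccount τ *
              ((a : ℂ) + b) ^ ecomp τ * ((a : ℂ) - b) ^ ocomp τ) WgSp σ := by
  have hT : ∀ ρ σ : Equiv.Perm (Fin (2 * k)),
      ∑ i : Fin (2 * k) → Fin (2 * (a + b)), DeltaSp ℂ σ i * DeltaSp ℂ ρ i =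
        (fun σ => (-1 : ℂ) ^ k * sgn ℂ σ * (-(2 * ((a : ℂ) + b))) ^ ccount σ) (ρ⁻¹ * σ) := by
    intro ρ σ
    rw [gram]
    push_cast
    rfl
  set T : Equiv.Perm (Fin (2 * k)) → ℂ :=
    fun σ => (-1 : ℂ) ^ k * sgn ℂ σ * (-(2 * ((a : ℂ) + b))) ^ ccount σ
  set f : Equiv.Perm (Fin (2 * k)) → ℂ :=
    fun τ => (-1 : ℂ) ^ (k - ccount τ) * sgn ℂ τ * 2 ^ ccount τ *
      ((a : ℂ) + b) ^ ecomp τ * ((a : ℂ) - b) ^ ocomp τ with hf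
  set K := Jmat ℂ (a + b) * Ippab ℂ (a + b) a with hK
  have hTH : ∀ τ ζ, IsHyper ζ → T (τ * ζ) = sgn ℂ ζ * T τ := by
    intro τ ζ hζ
    have h1 := hT 1 (τ * ζ)
    have h2 := hT 1 τ
    rw [inv_one, one_mul] at h1 h2
    rw [← h1, ← h2, Finset.mul_sum]
    refine Finset.sum_congr rfl fun i _ => ?_
    rw [DeltaSp_mul_hyper τ ζ hζ]
    ring
  -- The difference of the two sides, as a tensor in `i`.
  set D : (Fin (2 * k) → Fin (2 * (a + b))) → ℂ := fun i =>
    (∑ p : Fin (2 * k) → Fin (2 * (a + b)),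
      (∏ s, K (p (lo s)) (p (hi s))) * avg (2 * k) μ p i) -
    ∑ σ ∈ Mset k, DeltaSp ℂ σ i * sconv f WgSp σ with hD
  have hDinv : Inv D := by
    intro h hh i
    have e1 := integral_quad_Inv (k := k) μ hsupp hμ K h hh i
    simp only [hD, mul_sub, Finset.sum_sub_distrib]
    rw [← e1]
    congr 1
    simp only [Finset.mul_sum]
    rw [Finset.sum_comm]
    refine Finset.sum_congr rfl fun σ _ => ?_
    have e2 := congrArg (· * sconv f WgSp σ) (DeltaSp_Inv σ h hh i)
    simp only [Finset.sum_mul] at e2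
    refine e2.trans ?_
    exact Finset.sum_congr rfl fun q _ => mul_assoc _ _ _
  have hcontr : ∀ ρ ∈ Mset k, ∑ i, DeltaSp ℂ ρ i * D i = 0 := by
    intro ρ hρ
    simp only [hD, mul_sub, Finset.sum_sub_distrib]
    have e1 : ∑ i, DeltaSp ℂ ρ i * ∑ p : Fin (2 * k) → Fin (2 * (a + b)),
        (∏ s, K (p (lo s)) (p (hi s))) * avg (2 * k) μ p i = f ρ := by
      rw [hf]
      simp only
      rw [← loop_sum_CII]
      simp only [Finset.mul_sum]
      rw [Finset.sum_comm]
      refine Finset.sum_congr rfl fun p _ => ?_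
      rw [← contract_avg μ hsupp ρ p, Finset.sum_mul]
      exact Finset.sum_congr rfl fun i _ => by ring
    have e2 : ∑ i : Fin (2 * k) → Fin (2 * (a + b)), DeltaSp ℂ ρ i *
        ∑ σ ∈ Mset k, DeltaSp ℂ σ i * sconv f WgSp σ = f ρ := by
      rw [← sconv_gram T WgSp f hTH hbi hWg ρ hρ]
      simp only [Finset.mul_sum]
      rw [Finset.sum_comm]
      refine Finset.sum_congr rfl fun σ _ => ?_
      rw [← hT σ ρ, Finset.mul_sum]
      exact Finset.sum_congr rfl fun i _ => by ring
    rw [e1, e2, sub_self]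
  have hD0 : D = 0 := by
    refine inv_eq_zero k (by omega) D hDinv fun σ => ?_
    obtain ⟨ζ, hζ, hM⟩ := exists_rep σ
    have h1 := hcontr _ hM
    simp only [DeltaSp_mul_hyper σ ζ hζ, mul_assoc] at h1
    rw [← Finset.mul_sum] at h1
    refine (mul_eq_zero.mp h1).resolve_left fun h0 => ?_
    have := sgn_mul_self ζ
    rw [h0] at this
    simp at this
  have h1 := congrFun hD0 i
  simp only [hD, Pi.zero_apply, sub_eq_zero] at h1
  rw [← h1]
  exact integral_quad μ K i

end WgPaper
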